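/- Let σ > 1, p ≥ 2 with p = 2/(1-2s) and 1/4 ≤ s < 1/2, and let e^{-it|∇|^σ} denote the Fourier multiplier with symbol e^{-it|ξ|^σ}. Then for Schwartz f, ‖ sup_{t∈ℝ} |e^{-it|∇|^σ} f| ‖_{L^p_x(ℝ)} ≲ ‖ |∇|^s f ‖_{L²(ℝ)}. -/

import Mathlib

open MeasureTheory Complex ENNReal

/-- Fourier transform with the convention `f̂(ξ) = ∫ f(x) e^{-ixξ} dx`. -/
noncomputable def fourierT (f : ℝ → ℂ) (ξ : ℝ) : ℂ :=
  ∫ x : ℝ, f x * Complex.exp (-(Complex.I * (x : ℂ) * (ξ : ℂ)))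

/-! Van der Corput's lemma shows that the kernel `∫ |ξ|^{-2s} e^{i(xξ - t|ξ|^σ)} dξ` is
`O(|x|^{-(1-2s)})` uniformly in `t`: scaling reduces to `|x| = 1`, and when the phase has a
stationary point `ρ` the trivial bound is needed only on a window of width `√ρ` around it, where the
amplitude is `O(ρ^{-1/2})` because `2s ≥ 1/2`. Choosing a measurable time `τ(x)` that nearly attains
the supremum makes the maximal operator linear. By `TT*`, the weighted `L²` norm of its transpose
applied to `h` is controlled by `∬ |h(x)| |h(y)| |x - y|^{-(1-2s)} dx dy`, in which `τ` no longer
appears, and since `1 - 2s = 2/p` the Hardy–Littlewood–Sobolev inequality bounds this by the square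
of the norm of `h` in the dual of `L^p`. -/

section

open Set Filter Topology NNReal ComplexConjugate FourierTransform

section VanDerCorput

variable {a b l : ℝ} {φ φ' φ'' ψ ψ' : ℝ → ℝ}

theorem norm_integral_mul_deriv_mul_exp_le {v v' : ℝ → ℂ} (hab : a ≤ b)
    (hv : ∀ x ∈ Icc a b, HasDerivAt v (v' x) x) (hv' : ContinuousOn v' (Icc a b))
    (hφ : ∀ x ∈ Icc a b, HasDerivAt φ (φ' x) x) (hφ' : ContinuousOn φ' (Icc a b)) :
    ‖∫ x in a..b, v x * φ' x * cexp (I * φ x)‖ ≤ ‖v a‖ + ‖v b‖ + ∫ x in a..b, ‖v' x‖ := by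
  have hexp (x) (hx : x ∈ Icc a b) :
      HasDerivAt (fun x ↦ cexp (I * φ x)) (cexp (I * φ x) * (I * φ' x)) x :=
    ((hφ x hx).ofReal_comp.const_mul I).cexp
  have hexp' : ContinuousOn (fun x ↦ cexp (I * φ x) * (I * φ' x)) (Icc a b) :=
    (HasDerivAt.continuousOn hexp).mul
      (continuousOn_const.mul (continuous_ofReal.comp_continuousOn hφ'))
  rw [← uIcc_of_le hab] at *
  have parts : ∫ x in a..b, v x * φ' x * cexp (I * φ x) =
      -I * (v b * cexp (I * φ b) - v a * cexp (I * φ a) - ∫ x in a..b, v' x * cexp (I * φ x)) := by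
    rw [← intervalIntegral.integral_mul_deriv_eq_deriv_mul hv hexp hv'.intervalIntegrable
      hexp'.intervalIntegrable, ← intervalIntegral.integral_const_mul]
    congr 1 with x
    linear_combination (v x * φ' x * cexp (I * φ x)) * I_mul_I
  have hint : ‖∫ x in a..b, v' x * cexp (I * φ x)‖ ≤ ∫ x in a..b, ‖v' x‖ := by
    refine (intervalIntegral.norm_integral_le_integral_norm hab).trans_eq ?_
    simp only [norm_mul, norm_exp_I_mul_ofReal, mul_one]
  calc ‖∫ x in a..b, v x * φ' x * cexp (I * φ x)‖
      ≤ ‖v b‖ + ‖v a‖ + ‖∫ x in a..b, v' x * cexp (I * φ x)‖ := by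
        rw [parts, norm_mul, norm_neg, norm_I, one_mul]
        refine (norm_sub_le _ _).trans (add_le_add_left ((norm_sub_le _ _).trans_eq ?_) _)
        simp only [norm_mul, norm_exp_I_mul_ofReal, mul_one]
    _ ≤ ‖v a‖ + ‖v b‖ + ∫ x in a..b, ‖v' x‖ := by linarith

lemma antitoneOn_Icc_of_hasDerivAt_nonpos (hψ : ∀ x ∈ Icc a b, HasDerivAt ψ (ψ' x) x)
    (hψ'_nonpos : ∀ x ∈ Icc a b, ψ' x ≤ 0) : AntitoneOn ψ (Icc a b) := by
  refine antitoneOn_of_hasDerivWithinAt_nonpos (convex_Icc a b)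
    (HasDerivAt.continuousOn hψ)
    (fun x hx ↦ (hψ x (interior_subset hx)).hasDerivWithinAt)
    fun x hx ↦ hψ'_nonpos x (interior_subset hx)

lemma abs_deriv_div_le {w w' c c' B : ℝ} (hl : 0 < l) (hw : l ≤ |w|) (hw' : 0 ≤ w')
    (hc : 0 ≤ c) (hcB : c ≤ B) (hc' : c' ≤ 0) :
    |(c' * w - c * w') / w ^ 2| ≤ -c' / l + B * (w' / w ^ 2) := by
  have hw0 : w ≠ 0 := abs_pos.1 (hl.trans_le hw)
  calc |(c' * w - c * w') / w ^ 2| = |c' / w - c * (w' / w ^ 2)| := by congr 1; field_simp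
    _ ≤ |c' / w| + |c * (w' / w ^ 2)| := abs_sub _ _
    _ = -c' / |w| + c * (w' / w ^ 2) := by
        rw [abs_div, abs_of_nonpos hc', abs_of_nonneg (by positivity : 0 ≤ c * (w' / w ^ 2))]
    _ ≤ -c' / l + B * (w' / w ^ 2) := by gcongr; linarith

lemma integral_deriv_div_sq_le {w w' : ℝ → ℝ} (hab : a ≤ b) (hl : 0 < l)
    (hw : ∀ x ∈ Icc a b, HasDerivAt w (w' x) x) (hw' : ContinuousOn w' (Icc a b))
    (hw_ge : ∀ x ∈ Icc a b, l ≤ |w x|) : ∫ x in a..b, w' x / w x ^ 2 ≤ 2 / l := by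
  have hne (x) (hx : x ∈ Icc a b) : w x ≠ 0 := abs_pos.1 (hl.trans_le (hw_ge x hx))
  have hinv (x) (hx : x ∈ Icc a b) : |(w x)⁻¹| ≤ 1 / l := by
    rw [abs_inv, one_div]
    exact inv_anti₀ hl (hw_ge x hx)
  have hcont : ContinuousOn (fun x ↦ w' x / w x ^ 2) (Icc a b) :=
    hw'.div ((HasDerivAt.continuousOn hw).pow 2) fun x hx ↦ pow_ne_zero 2 (hne x hx)
  have hprim (x) (hx : x ∈ Icc a b) : HasDerivAt (fun x ↦ -(w x)⁻¹) (w' x / w x ^ 2) x :=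
    ((hw x hx).inv (hne x hx)).neg.congr_deriv (by ring)
  calc ∫ x in a..b, w' x / w x ^ 2 = -(w b)⁻¹ - -(w a)⁻¹ :=
        intervalIntegral.integral_eq_sub_of_hasDerivAt (by rwa [uIcc_of_le hab])
          (hcont.intervalIntegrable_of_Icc hab)
    _ ≤ 1 / l + 1 / l := by
        linarith [neg_le_of_abs_le (hinv b (right_mem_Icc.2 hab)),
          le_of_abs_le (hinv a (left_mem_Icc.2 hab))]
    _ = 2 / l := by ring

theorem integral_abs_deriv_div_le (hab : a ≤ b) (hl : 0 < l)
    (hφ' : ∀ x ∈ Icc a b, HasDerivAt φ' (φ'' x) x) (hφ'' : ContinuousOn φ'' (Icc a b))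
    (hψ : ∀ x ∈ Icc a b, HasDerivAt ψ (ψ' x) x) (hψ' : ContinuousOn ψ' (Icc a b))
    (hψ_nonneg : ∀ x ∈ Icc a b, 0 ≤ ψ x) (hψ'_nonpos : ∀ x ∈ Icc a b, ψ' x ≤ 0)
    (hφ''_nonneg : ∀ x ∈ Icc a b, 0 ≤ φ'' x) (hφ'_ge : ∀ x ∈ Icc a b, l ≤ |φ' x|) :
    ∫ x in a..b, |(ψ' x * φ' x - ψ x * φ'' x) / φ' x ^ 2| ≤ 3 * ψ a / l := by
  have ha : a ∈ Icc a b := left_mem_Icc.2 hab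
  have hsq (x) (hx : x ∈ Icc a b) : φ' x ^ 2 ≠ 0 :=
    pow_ne_zero 2 (abs_pos.1 (hl.trans_le (hφ'_ge x hx)))
  have hφ'c := HasDerivAt.continuousOn hφ'
  have hψc := HasDerivAt.continuousOn hψ
  have hψ_le (x) (hx : x ∈ Icc a b) : ψ x ≤ ψ a :=
    antitoneOn_Icc_of_hasDerivAt_nonpos hψ hψ'_nonpos ha hx hx.1
  have hint₁ : IntervalIntegrable (fun x ↦ -ψ' x / l) volume a b :=
    (hψ'.neg.div_const l).intervalIntegrable_of_Icc hab
  have hint₂ : IntervalIntegrable (fun x ↦ ψ a * (φ'' x / φ' x ^ 2)) volume a b :=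
    (continuousOn_const.mul (hφ''.div (hφ'c.pow 2) hsq)).intervalIntegrable_of_Icc hab
  have hFTC : ∫ x in a..b, ψ' x = ψ b - ψ a :=
    intervalIntegral.integral_eq_sub_of_hasDerivAt (by rwa [uIcc_of_le hab])
      (hψ'.intervalIntegrable_of_Icc hab)
  calc ∫ x in a..b, |(ψ' x * φ' x - ψ x * φ'' x) / φ' x ^ 2|
      ≤ ∫ x in a..b, (-ψ' x / l + ψ a * (φ'' x / φ' x ^ 2)) :=
        intervalIntegral.integral_mono_on hab
          ((((hψ'.mul hφ'c).sub (hψc.mul hφ'')).div (hφ'c.pow 2)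
            hsq).abs.intervalIntegrable_of_Icc hab) (hint₁.add hint₂) fun x hx ↦
          abs_deriv_div_le hl (hφ'_ge x hx) (hφ''_nonneg x hx) (hψ_nonneg x hx) (hψ_le x hx)
            (hψ'_nonpos x hx)
    _ = (ψ a - ψ b) / l + ψ a * ∫ x in a..b, φ'' x / φ' x ^ 2 := by
        rw [intervalIntegral.integral_add hint₁ hint₂, intervalIntegral.integral_div,
          intervalIntegral.integral_neg, hFTC, intervalIntegral.integral_const_mul, neg_sub]
    _ ≤ ψ a / l + ψ a * (2 / l) := by
        gcongr
        · linarith [hψ_nonneg b (right_mem_Icc.2 hab)]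
        · exact hψ_nonneg a ha
        · exact integral_deriv_div_sq_le hab hl hφ' hφ'' hφ'_ge
    _ = 3 * ψ a / l := by ring

lemma norm_integral_mul_exp_le_of_deriv2_nonneg (hab : a ≤ b) (hl : 0 < l)
    (hφ : ∀ x ∈ Icc a b, HasDerivAt φ (φ' x) x)
    (hφ' : ∀ x ∈ Icc a b, HasDerivAt φ' (φ'' x) x) (hφ'' : ContinuousOn φ'' (Icc a b))
    (hψ : ∀ x ∈ Icc a b, HasDerivAt ψ (ψ' x) x) (hψ' : ContinuousOn ψ' (Icc a b))
    (hψ_nonneg : ∀ x ∈ Icc a b, 0 ≤ ψ x) (hψ'_nonpos : ∀ x ∈ Icc a b, ψ' x ≤ 0)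
    (hφ''_nonneg : ∀ x ∈ Icc a b, 0 ≤ φ'' x) (hφ'_ge : ∀ x ∈ Icc a b, l ≤ |φ' x|) :
    ‖∫ x in a..b, (ψ x : ℂ) * cexp (I * φ x)‖ ≤ 5 * ψ a / l := by
  have ha : a ∈ Icc a b := left_mem_Icc.2 hab
  have hb : b ∈ Icc a b := right_mem_Icc.2 hab
  have hne (x) (hx : x ∈ Icc a b) : φ' x ≠ 0 := abs_pos.1 (hl.trans_le (hφ'_ge x hx))
  have hφ'c := HasDerivAt.continuousOn hφ'
  have hψc := HasDerivAt.continuousOn hψ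
  have hψ_le (x) (hx : x ∈ Icc a b) : ψ x ≤ ψ a :=
    antitoneOn_Icc_of_hasDerivAt_nonpos hψ hψ'_nonpos ha hx hx.1
  have hend (x) (hx : x ∈ Icc a b) : ‖((ψ x / φ' x : ℝ) : ℂ)‖ ≤ ψ a / l := by
    rw [norm_real, Real.norm_eq_abs, abs_div, abs_of_nonneg (hψ_nonneg x hx)]
    exact div_le_div₀ (hψ_nonneg a ha) (hψ_le x hx) hl (hφ'_ge x hx)
  have hdiv' : ContinuousOn (fun x ↦ (ψ' x * φ' x - ψ x * φ'' x) / φ' x ^ 2) (Icc a b) :=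
    ((hψ'.mul hφ'c).sub (hψc.mul hφ'')).div (hφ'c.pow 2) fun x hx ↦ pow_ne_zero 2 (hne x hx)
  have heq : ∫ x in a..b, (ψ x : ℂ) * cexp (I * φ x) =
      ∫ x in a..b, ((ψ x / φ' x : ℝ) : ℂ) * φ' x * cexp (I * φ x) := by
    refine intervalIntegral.integral_congr fun x hx ↦ ?_
    rw [uIcc_of_le hab] at hx
    simp only [← Complex.ofReal_mul, div_mul_cancel₀ _ (hne x hx)]
  have key := norm_integral_mul_deriv_mul_exp_le hab
    (fun x hx ↦ ((hψ x hx).div (hφ' x hx) (hne x hx)).ofReal_comp)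
    (continuous_ofReal.comp_continuousOn hdiv') hφ hφ'c
  simp only [norm_real (_ / _ ^ 2), Real.norm_eq_abs, Pi.div_apply] at key
  have hvar := integral_abs_deriv_div_le hab hl hφ' hφ'' hψ hψ' hψ_nonneg hψ'_nonpos hφ''_nonneg
    hφ'_ge
  rw [heq]
  linarith [hend a ha, hend b hb, (by ring : 5 * ψ a / l = ψ a / l + ψ a / l + 3 * ψ a / l)]

theorem norm_integral_mul_exp_le_of_le_abs_deriv (hab : a ≤ b) (hl : 0 < l)
    (hφ : ∀ x ∈ Icc a b, HasDerivAt φ (φ' x) x)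
    (hφ' : ∀ x ∈ Icc a b, HasDerivAt φ' (φ'' x) x) (hφ'' : ContinuousOn φ'' (Icc a b))
    (hψ : ∀ x ∈ Icc a b, HasDerivAt ψ (ψ' x) x) (hψ' : ContinuousOn ψ' (Icc a b))
    (hψ_nonneg : ∀ x ∈ Icc a b, 0 ≤ ψ x) (hψ'_nonpos : ∀ x ∈ Icc a b, ψ' x ≤ 0)
    (hφ''_sign : (∀ x ∈ Icc a b, 0 ≤ φ'' x) ∨ ∀ x ∈ Icc a b, φ'' x ≤ 0)
    (hφ'_ge : ∀ x ∈ Icc a b, l ≤ |φ' x|) :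
    ‖∫ x in a..b, (ψ x : ℂ) * cexp (I * φ x)‖ ≤ 5 * ψ a / l := by
  rcases hφ''_sign with hsign | hsign
  · exact norm_integral_mul_exp_le_of_deriv2_nonneg hab hl hφ hφ' hφ'' hψ hψ' hψ_nonneg hψ'_nonpos
      hsign hφ'_ge
  · have hconj (x : ℝ) :
        (ψ x : ℂ) * cexp (I * φ x) = conj ((ψ x : ℂ) * cexp (I * (-φ x : ℝ))) := by
      simp [← exp_conj]
    simp only [hconj, intervalIntegral.integral_of_le hab, integral_conj, RCLike.norm_conj]
    rw [← intervalIntegral.integral_of_le hab]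
    exact norm_integral_mul_exp_le_of_deriv2_nonneg hab hl (fun x hx ↦ (hφ x hx).neg)
      (fun x hx ↦ (hφ' x hx).neg) hφ''.neg hψ hψ' hψ_nonneg hψ'_nonpos
      (fun x hx ↦ neg_nonneg.2 (hsign x hx)) fun x hx ↦ (hφ'_ge x hx).trans_eq (abs_neg _).symm

end VanDerCorput

section PowerLowerBound

lemma min_one_abs_div_two_le_abs_exp_sub_one (y : ℝ) : min 1 |y| / 2 ≤ |Real.exp y - 1| := by
  rcases le_total 0 y with hy | hy
  · rw [abs_of_nonneg hy, abs_of_nonneg (by linarith [Real.one_le_exp hy])]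
    linarith [min_le_right 1 y, Real.add_one_le_exp y]
  · have hinv : Real.exp y ≤ (1 + -y)⁻¹ := by
      rw [← inv_inv (Real.exp y), ← Real.exp_neg]
      exact inv_anti₀ (by linarith) (by linarith [Real.add_one_le_exp (-y)])
    have hfrac : min 1 (-y) / 2 ≤ 1 - (1 + -y)⁻¹ := by
      have hy' : 0 < 1 + -y := by linarith
      rw [show 1 - (1 + -y)⁻¹ = -y / (1 + -y) by field_simp; ring, div_le_div_iff₀ two_pos hy']
      rcases le_total 1 (-y) with h | h
      · rw [min_eq_left h]; linarith
      · rw [min_eq_right h]; nlinarith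
    rw [abs_of_nonpos hy, abs_of_nonpos (by linarith [Real.exp_le_one_iff.2 hy])]
    linarith

lemma min_one_abs_sub_one_div_two_le_abs_log {u : ℝ} (hu : 0 < u) :
    min 1 |u - 1| / 2 ≤ |Real.log u| := by
  rcases le_total 1 u with h | h
  · have hlog : 1 - u⁻¹ ≤ Real.log u := Real.one_sub_inv_le_log_of_pos hu
    have hfrac : min 1 (u - 1) / 2 ≤ 1 - u⁻¹ := by
      rw [show 1 - u⁻¹ = (u - 1) / u by field_simp, div_le_div_iff₀ two_pos hu]
      rcases le_total 1 (u - 1) with h' | h'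
      · rw [min_eq_left h']; linarith
      · rw [min_eq_right h']; nlinarith
    rw [abs_of_nonneg (sub_nonneg.2 h), abs_of_nonneg (Real.log_nonneg h)]
    exact hfrac.trans hlog
  · rw [abs_of_nonpos (sub_nonpos.2 h), abs_of_nonpos (Real.log_nonpos hu.le h)]
    linarith [min_le_right 1 (-(u - 1)), Real.log_le_sub_one_of_pos hu]

lemma min_mul_min_le_min_one_mul {a b : ℝ} (ha : 0 ≤ a) (hb : 0 ≤ b) :
    min 1 a * min 1 b ≤ min 1 (a * b) :=
  le_min (mul_le_one₀ (min_le_left _ _) (le_min zero_le_one hb) (min_le_left _ _))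
    (mul_le_mul (min_le_right _ _) (min_le_right _ _) (le_min zero_le_one hb) ha)

theorem min_one_abs_mul_min_le_abs_rpow_sub_one {u : ℝ} (hu : 0 < u) (κ : ℝ) :
    min 1 |κ| / 4 * min 1 |u - 1| ≤ |u ^ κ - 1| := by
  have hlog : min 1 |u - 1| / 2 ≤ min 1 |Real.log u| :=
    le_min (by linarith [min_le_left 1 |u - 1|]) (min_one_abs_sub_one_div_two_le_abs_log hu)
  calc min 1 |κ| / 4 * min 1 |u - 1| = min 1 |κ| * (min 1 |u - 1| / 2) / 2 := by ring
    _ ≤ min 1 |κ| * min 1 |Real.log u| / 2 := by gcongr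
    _ ≤ min 1 |Real.log u * κ| / 2 := by
        rw [mul_comm (Real.log u), abs_mul]
        gcongr
        exact min_mul_min_le_min_one_mul (abs_nonneg _) (abs_nonneg _)
    _ ≤ |u ^ κ - 1| := by
        rw [Real.rpow_def_of_pos hu]
        exact min_one_abs_div_two_le_abs_exp_sub_one _

end PowerLowerBound

/-- The plane wave `e^{i(xξ - t|ξ|^σ)}`, so that the fractional Schrödinger evolution of `f` is the
superposition of the waves `dispersiveWave σ t x ξ` with amplitudes `f̂(ξ)`. -/
noncomputable def dispersiveWave (σ t x ξ : ℝ) : ℂ := cexp (I * ((x * ξ - t * |ξ| ^ σ : ℝ) : ℂ))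

/-- The integrand of the oscillatory kernel `K_t(x) = ∫ |ξ|^{-α} e^{i(xξ - t|ξ|^σ)} dξ`. -/
noncomputable def kernelIntegrand (α σ t x ξ : ℝ) : ℂ :=
  ((|ξ| ^ (-α) : ℝ) : ℂ) * dispersiveWave σ t x ξ

/-- `HasIntegralBoundOn F S M` says that the integrals of `F` over compact intervals with endpoints
in `S` are bounded by `M`. It is used for intervals `S`, and for integrals over unbounded `S` that
converge only conditionally. -/
def HasIntegralBoundOn (F : ℝ → ℂ) (S : Set ℝ) (M : ℝ) : Prop :=
  ∀ a ∈ S, ∀ b ∈ S, a ≤ b → ‖∫ x in a..b, F x‖ ≤ M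

section DispersiveWave

variable {α σ t x ξ : ℝ}

lemma norm_dispersiveWave : ‖dispersiveWave σ t x ξ‖ = 1 := norm_exp_I_mul_ofReal _

lemma measurable_dispersiveWave {X : Type*} [MeasurableSpace X] {t x ξ : X → ℝ} (ht : Measurable t)
    (hx : Measurable x) (hξ : Measurable ξ) :
    Measurable fun z ↦ dispersiveWave σ (t z) (x z) (ξ z) := by
  unfold dispersiveWave
  fun_prop

lemma conj_dispersiveWave : conj (dispersiveWave σ t x ξ) = dispersiveWave σ (-t) (-x) ξ := by
  rw [dispersiveWave, ← exp_conj, map_mul, conj_I, conj_ofReal, dispersiveWave]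
  congr 1
  push_cast
  ring

lemma dispersiveWave_mul_conj (t' x' : ℝ) :
    dispersiveWave σ t x ξ * conj (dispersiveWave σ t' x' ξ) =
      dispersiveWave σ (t - t') (x - x') ξ := by
  rw [conj_dispersiveWave, dispersiveWave, dispersiveWave, dispersiveWave, ← Complex.exp_add]
  congr 1
  push_cast
  ring

lemma norm_kernelIntegrand : ‖kernelIntegrand α σ t x ξ‖ = |ξ| ^ (-α) := by
  rw [kernelIntegrand, norm_mul, norm_dispersiveWave, mul_one, norm_real,
    Real.norm_of_nonneg (by positivity)]

lemma locallyIntegrable_abs_rpow_neg (hα : α < 1) : LocallyIntegrable fun ξ : ℝ ↦ |ξ| ^ (-α) := by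
  refine locallyIntegrable_of_norm_le_rpow (C := 1) (α := α) (by simp) (by simpa using hα)
    (ae_of_all _ fun ξ ↦ ?_) (measurable_norm.pow_const _).aestronglyMeasurable
  rw [Real.norm_of_nonneg (by positivity), Real.norm_eq_abs, one_mul]

lemma locallyIntegrable_kernelIntegrand (hα : α < 1) :
    LocallyIntegrable (kernelIntegrand α σ t x) := by
  refine (locallyIntegrable_abs_rpow_neg hα).mono ?_ (ae_of_all _ fun ξ ↦ ?_)
  · unfold kernelIntegrand dispersiveWave
    fun_prop
  · rw [norm_kernelIntegrand, Real.norm_of_nonneg (by positivity)]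

lemma intervalIntegrable_kernelIntegrand (hα : α < 1) (a b : ℝ) :
    IntervalIntegrable (kernelIntegrand α σ t x) volume a b :=
  ((locallyIntegrable_kernelIntegrand hα).integrableOn_isCompact isCompact_uIcc).intervalIntegrable

end DispersiveWave

section IntegralBound

variable {F : ℝ → ℂ} {S : Set ℝ} {M M' A B : ℝ}

lemma HasIntegralBoundOn.mono (h : HasIntegralBoundOn F S M) (hM : M ≤ M') :
    HasIntegralBoundOn F S M' :=
  fun a ha b hb hab ↦ (h a ha b hb hab).trans hM

lemma HasIntegralBoundOn.Icc_union_Ici (hF : ∀ a b, IntervalIntegrable F volume a b) (hAB : A ≤ B)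
    (h : HasIntegralBoundOn F (Icc A B) M) (h' : HasIntegralBoundOn F (Ici B) M') :
    HasIntegralBoundOn F (Ici A) (M + M') := by
  have hA : A ∈ Icc A B := left_mem_Icc.2 hAB
  have hM : 0 ≤ M := (norm_nonneg _).trans (h A hA A hA le_rfl)
  have hM' : 0 ≤ M' := (norm_nonneg _).trans (h' B self_mem_Ici B self_mem_Ici le_rfl)
  intro a ha b hb hab
  rcases le_total b B with hbB | hBb
  · linarith [h a ⟨ha, hab.trans hbB⟩ b ⟨hb, hbB⟩ hab]
  · rcases le_total B a with hBa | haB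
    · linarith [h' a hBa b hBb hab]
    · rw [← intervalIntegral.integral_add_adjacent_intervals (hF a B) (hF B b)]
      exact norm_add_le_of_le (h a ⟨ha, haB⟩ B (right_mem_Icc.2 hAB) haB)
        (h' B self_mem_Ici b hBb hBb)

lemma hasIntegralBoundOn_Icc_of_norm_le {m : ℝ} (hm : ∀ x ∈ Icc A B, ‖F x‖ ≤ m) :
    HasIntegralBoundOn F (Icc A B) (m * (B - A)) := by
  intro a ha b hb hab
  have hm0 : 0 ≤ m := (norm_nonneg _).trans (hm a ha)
  refine (intervalIntegral.norm_integral_le_of_norm_le_const (C := m) fun x hx ↦ ?_).trans ?_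
  · rw [uIoc_of_le hab] at hx
    exact hm x ⟨ha.1.trans hx.1.le, hx.2.trans hb.2⟩
  · rw [abs_of_nonneg (sub_nonneg.2 hab)]
    have := ha.1
    have := hb.2
    gcongr

end IntegralBound

/-- The constant `c` in the lower bound `c * min 1 |ξ/ρ - 1|` for the derivative of the phase
`ξ - tξ^σ` with stationary point `ρ`. -/
noncomputable def phaseGap (σ : ℝ) : ℝ := min 1 |σ - 1| / 4

section KernelAtOne

variable {α σ t : ℝ}

lemma hasIntegralBoundOn_kernelIntegrand_Icc_zero (hα : α < 1) (x B : ℝ) :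
    HasIntegralBoundOn (kernelIntegrand α σ t x) (Icc 0 B) (B ^ (1 - α) / (1 - α)) := by
  have hint (a b : ℝ) : IntervalIntegrable (fun ξ : ℝ ↦ ξ ^ (-α)) volume a b :=
    intervalIntegral.intervalIntegrable_rpow' (by linarith)
  intro a ha b hb hab
  calc ‖∫ ξ in a..b, kernelIntegrand α σ t x ξ‖ ≤ ∫ ξ in a..b, ξ ^ (-α) := by
        refine intervalIntegral.norm_integral_le_of_norm_le hab (ae_of_all _ fun ξ hξ ↦ ?_)
          (hint a b)
        rw [norm_kernelIntegrand, abs_of_nonneg (ha.1.trans hξ.1.le)]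
    _ ≤ ∫ ξ in 0..B, ξ ^ (-α) := by
        refine intervalIntegral.integral_mono_interval ha.1 hab hb.2 ?_ (hint 0 B)
        filter_upwards [ae_restrict_mem measurableSet_Ioc] with ξ hξ
        exact Real.rpow_nonneg hξ.1.le _
    _ = B ^ (1 - α) / (1 - α) := by
        rw [integral_rpow (Or.inl (by linarith)), neg_add_eq_sub, Real.zero_rpow (by linarith),
          sub_zero]

lemma norm_integral_kernelIntegrand_le (hα : 0 ≤ α) {a b l : ℝ} (ha : 0 < a) (hab : a ≤ b)
    (hl : 0 < l) (hphase : ∀ ξ ∈ Icc a b, l ≤ |1 - t * σ * ξ ^ (σ - 1)|) :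
    ‖∫ ξ in a..b, kernelIntegrand α σ t 1 ξ‖ ≤ 5 * a ^ (-α) / l := by
  have hpos (ξ) (hξ : ξ ∈ Icc a b) : 0 < ξ := ha.trans_le hξ.1
  have hder (κ : ℝ) (ξ) (hξ : ξ ∈ Icc a b) : HasDerivAt (· ^ κ) (κ * ξ ^ (κ - 1)) ξ :=
    Real.hasDerivAt_rpow_const (Or.inl (hpos ξ hξ).ne')
  have hcont (c κ : ℝ) : ContinuousOn (fun ξ ↦ c * ξ ^ κ) (Icc a b) := fun ξ hξ ↦
    ((Real.continuousAt_rpow_const _ _ (Or.inl (hpos ξ hξ).ne')).const_mul c).continuousWithinAt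
  have hsign : (∀ ξ ∈ Icc a b, 0 ≤ -(t * σ * (σ - 1)) * ξ ^ (σ - 1 - 1)) ∨
      ∀ ξ ∈ Icc a b, -(t * σ * (σ - 1)) * ξ ^ (σ - 1 - 1) ≤ 0 :=
    (le_total 0 (-(t * σ * (σ - 1)))).imp
      (fun h ξ hξ ↦ mul_nonneg h (Real.rpow_nonneg (hpos ξ hξ).le _))
      fun h ξ hξ ↦ mul_nonpos_of_nonpos_of_nonneg h (Real.rpow_nonneg (hpos ξ hξ).le _)
  have heq : ∫ ξ in a..b, kernelIntegrand α σ t 1 ξ =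
      ∫ ξ in a..b, ((ξ ^ (-α) : ℝ) : ℂ) * cexp (I * (ξ - t * ξ ^ σ : ℝ)) := by
    refine intervalIntegral.integral_congr fun ξ hξ ↦ ?_
    rw [uIcc_of_le hab] at hξ
    simp only [kernelIntegrand, dispersiveWave, abs_of_pos (hpos ξ hξ), one_mul]
  rw [heq]
  refine norm_integral_mul_exp_le_of_le_abs_deriv (φ' := fun ξ ↦ 1 - t * σ * ξ ^ (σ - 1))
    (ψ := (· ^ (-α))) hab hl (fun ξ hξ ↦ ?_) (fun ξ hξ ↦ ?_) (hcont _ _) (hder (-α)) (hcont _ _)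
    (fun ξ hξ ↦ Real.rpow_nonneg (hpos ξ hξ).le _)
    (fun ξ hξ ↦ mul_nonpos_of_nonpos_of_nonneg (neg_nonpos.2 hα)
      (Real.rpow_nonneg (hpos ξ hξ).le _)) hsign hphase
  · exact ((hasDerivAt_id ξ).sub ((hder σ ξ hξ).const_mul t)).congr_deriv (by ring)
  · exact (((hder (σ - 1) ξ hξ).const_mul (t * σ)).const_sub 1).congr_deriv (by ring)

lemma hasIntegralBoundOn_of_le_abs_phase_deriv (hα : 0 ≤ α) {S : Set ℝ} (hS : S.OrdConnected)
    {l m : ℝ} (hl : 0 < l) (hpos : ∀ ξ ∈ S, 0 < ξ) (hm : ∀ ξ ∈ S, ξ ^ (-α) ≤ m)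
    (hphase : ∀ ξ ∈ S, l ≤ |1 - t * σ * ξ ^ (σ - 1)|) :
    HasIntegralBoundOn (kernelIntegrand α σ t 1) S (5 * m / l) := by
  intro a ha b hb hab
  refine (norm_integral_kernelIntegrand_le hα (hpos a ha) hab hl
    fun ξ hξ ↦ hphase ξ (hS.out ha hb hξ)).trans ?_
  have := hm a ha
  gcongr

lemma rpow_neg_le_one (hα : 0 ≤ α) {ξ : ℝ} (hξ : 1 ≤ ξ) : ξ ^ (-α) ≤ 1 :=
  Real.rpow_le_one_of_one_le_of_nonpos hξ (neg_nonpos.2 hα)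

lemma hasIntegralBoundOn_kernelIntegrand_of_mul_nonpos (hα : 0 ≤ α) (hα1 : α < 1)
    (htσ : t * σ ≤ 0) :
    HasIntegralBoundOn (kernelIntegrand α σ t 1) (Ici 0) (1 / (1 - α) + 5) := by
  have hnear : HasIntegralBoundOn (kernelIntegrand α σ t 1) (Icc 0 1) (1 / (1 - α)) := by
    simpa only [Real.one_rpow] using hasIntegralBoundOn_kernelIntegrand_Icc_zero hα1 1 1
  have hfar : HasIntegralBoundOn (kernelIntegrand α σ t 1) (Ici 1) 5 := by
    have hpos (ξ : ℝ) (hξ : ξ ∈ Ici (1 : ℝ)) : 0 < ξ := one_pos.trans_le hξ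
    convert hasIntegralBoundOn_of_le_abs_phase_deriv hα ordConnected_Ici one_pos hpos
      (fun ξ hξ ↦ rpow_neg_le_one hα hξ) fun ξ hξ ↦ le_abs.2 (Or.inl ?_) using 1
    · norm_num
    · linarith [mul_nonpos_of_nonpos_of_nonneg htσ (Real.rpow_nonneg (hpos ξ hξ).le (σ - 1))]
  exact hnear.Icc_union_Ici (intervalIntegrable_kernelIntegrand hα1) zero_le_one hfar

section StationaryPoint

variable {r ξ : ℝ}

lemma phaseGap_pos (hσ : σ ≠ 1) : 0 < phaseGap σ :=
  div_pos (lt_min one_pos (abs_pos.2 (sub_ne_zero.2 hσ))) four_pos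

lemma le_abs_phase_deriv (hr : 0 < r) (htσ : t * σ = (r ^ 2) ^ (-(σ - 1))) (hξ : 0 < ξ) :
    phaseGap σ * min 1 |ξ / r ^ 2 - 1| ≤ |1 - t * σ * ξ ^ (σ - 1)| := by
  have hscale : t * σ * ξ ^ (σ - 1) = (ξ / r ^ 2) ^ (σ - 1) := by
    rw [htσ, Real.rpow_neg (by positivity), Real.div_rpow hξ.le (by positivity), div_eq_inv_mul]
  rw [hscale, abs_sub_comm 1]
  exact min_one_abs_mul_min_le_abs_rpow_sub_one (by positivity) _

lemma hasIntegralBoundOn_kernelIntegrand_of_stationary_le (hα : 0 ≤ α) (hα1 : α < 1) (hσ : σ ≠ 1)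
    (hr : 0 < r) (hr2 : r ≤ 2) (htσ : t * σ = (r ^ 2) ^ (-(σ - 1))) :
    HasIntegralBoundOn (kernelIntegrand α σ t 1) (Ici 0)
      (8 ^ (1 - α) / (1 - α) + 5 / phaseGap σ) := by
  have hc := phaseGap_pos hσ
  have hpos (ξ : ℝ) (hξ : ξ ∈ Ici 8) : 0 < ξ := by linarith [mem_Ici.1 hξ]
  have hphase (ξ : ℝ) (hξ : ξ ∈ Ici 8) : phaseGap σ ≤ |1 - t * σ * ξ ^ (σ - 1)| := by
    have hfar : 1 ≤ |ξ / r ^ 2 - 1| := by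
      refine le_abs.2 (Or.inl ?_)
      rw [le_sub_iff_add_le, le_div_iff₀ (by positivity)]
      nlinarith [mem_Ici.1 hξ]
    simpa only [min_eq_left hfar, mul_one] using le_abs_phase_deriv hr htσ (hpos ξ hξ)
  have hosc := hasIntegralBoundOn_of_le_abs_phase_deriv hα ordConnected_Ici hc hpos
    (fun ξ hξ ↦ rpow_neg_le_one hα (by linarith [mem_Ici.1 hξ])) hphase
  rw [mul_one] at hosc
  exact (hasIntegralBoundOn_kernelIntegrand_Icc_zero hα1 1 8).Icc_union_Ici
    (intervalIntegrable_kernelIntegrand hα1) (by norm_num) hosc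

lemma rpow_neg_le_two_div (hα : 1 / 2 ≤ α) (hr : 2 ≤ r) (hξ : r ^ 2 / 2 ≤ ξ) :
    ξ ^ (-α) ≤ 2 / r := by
  have hξ1 : 1 ≤ ξ := by nlinarith
  calc ξ ^ (-α) ≤ ξ ^ (-(1 / 2) : ℝ) := Real.rpow_le_rpow_of_exponent_le hξ1 (by linarith)
    _ ≤ ((r / 2) ^ 2) ^ (-(1 / 2) : ℝ) :=
        Real.rpow_le_rpow_of_nonpos (by positivity) (by nlinarith) (by norm_num)
    _ = 2 / r := by
        rw [Real.rpow_neg (by positivity), ← Real.sqrt_eq_rpow, Real.sqrt_sq (by positivity),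
          inv_div]

lemma hasIntegralBoundOn_kernelIntegrand_near_stationary (hα : 1 / 2 ≤ α) (hσ : σ ≠ 1) (hr : 2 ≤ r)
    (htσ : t * σ = (r ^ 2) ^ (-(σ - 1))) {S : Set ℝ} (hS : S.OrdConnected)
    (hge : ∀ ξ ∈ S, r ^ 2 / 2 ≤ ξ) (hdist : ∀ ξ ∈ S, r ≤ |ξ - r ^ 2|) :
    HasIntegralBoundOn (kernelIntegrand α σ t 1) S (10 / phaseGap σ) := by
  have hc := phaseGap_pos hσ
  have hpos (ξ : ℝ) (hξ : ξ ∈ S) : 0 < ξ := by nlinarith [hge ξ hξ]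
  have hr0 : 0 < r := by linarith
  have hphase (ξ : ℝ) (hξ : ξ ∈ S) :
      phaseGap σ * (1 / r) ≤ |1 - t * σ * ξ ^ (σ - 1)| := by
    refine le_trans ?_ (le_abs_phase_deriv hr0 htσ (hpos ξ hξ))
    gcongr
    refine le_min ((div_le_one hr0).2 (by linarith)) ?_
    rw [div_sub_one (by positivity), abs_div, abs_of_pos (by positivity : 0 < r ^ 2),
      div_le_div_iff₀ hr0 (by positivity)]
    nlinarith [hdist ξ hξ]
  convert hasIntegralBoundOn_of_le_abs_phase_deriv (by linarith) hS (mul_pos hc (by positivity))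
    hpos (fun ξ hξ ↦ rpow_neg_le_two_div hα hr (hge ξ hξ)) hphase using 1
  field_simp
  norm_num

lemma hasIntegralBoundOn_kernelIntegrand_one_Icc (hα : 0 ≤ α) (hσ : σ ≠ 1) (hr : 0 < r)
    (htσ : t * σ = (r ^ 2) ^ (-(σ - 1))) :
    HasIntegralBoundOn (kernelIntegrand α σ t 1) (Icc 1 (r ^ 2 / 2))
      (10 / phaseGap σ) := by
  have hc := phaseGap_pos hσ
  have hpos (ξ : ℝ) (hξ : ξ ∈ Icc 1 (r ^ 2 / 2)) : 0 < ξ := by linarith [hξ.1]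
  have hphase (ξ : ℝ) (hξ : ξ ∈ Icc 1 (r ^ 2 / 2)) :
      phaseGap σ * (1 / 2) ≤ |1 - t * σ * ξ ^ (σ - 1)| := by
    refine le_trans ?_ (le_abs_phase_deriv hr htσ (hpos ξ hξ))
    gcongr
    refine le_min (by norm_num) (le_abs.2 (Or.inr ?_))
    have : ξ / r ^ 2 ≤ 1 / 2 := by
      rw [div_le_iff₀ (by positivity)]
      linarith [hξ.2]
    linarith
  convert hasIntegralBoundOn_of_le_abs_phase_deriv hα ordConnected_Icc
    (mul_pos hc one_half_pos) hpos (fun ξ hξ ↦ rpow_neg_le_one hα hξ.1) hphase using 1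
  field_simp
  norm_num

lemma hasIntegralBoundOn_kernelIntegrand_of_le_stationary (hα : 1 / 2 ≤ α) (hα1 : α < 1)
    (hσ : σ ≠ 1) (hr : 2 ≤ r) (htσ : t * σ = (r ^ 2) ^ (-(σ - 1))) :
    HasIntegralBoundOn (kernelIntegrand α σ t 1) (Ici 0)
      (1 / (1 - α) + (10 / phaseGap σ + (10 / phaseGap σ +
        (4 + 10 / phaseGap σ)))) := by
  have hint := intervalIntegrable_kernelIntegrand (σ := σ) (t := t) (x := 1) hα1
  have horigin : HasIntegralBoundOn (kernelIntegrand α σ t 1) (Icc 0 1) (1 / (1 - α)) := by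
    simpa only [Real.one_rpow] using hasIntegralBoundOn_kernelIntegrand_Icc_zero hα1 1 1
  have hlow := hasIntegralBoundOn_kernelIntegrand_one_Icc (by linarith : 0 ≤ α) hσ
    (by linarith) htσ
  have hleft : HasIntegralBoundOn (kernelIntegrand α σ t 1) (Icc (r ^ 2 / 2) (r ^ 2 - r))
      (10 / phaseGap σ) :=
    hasIntegralBoundOn_kernelIntegrand_near_stationary hα hσ hr htσ ordConnected_Icc
      (fun ξ hξ ↦ hξ.1) fun ξ hξ ↦ le_abs.2 (Or.inr (by linarith [hξ.2]))
  -- Near the stationary point `r ^ 2` nothing oscillates, but `|ξ| ^ (-α) ≤ 2 / r`.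
  have hmid : HasIntegralBoundOn (kernelIntegrand α σ t 1) (Icc (r ^ 2 - r) (r ^ 2 + r)) 4 := by
    convert hasIntegralBoundOn_Icc_of_norm_le (m := 2 / r) fun ξ hξ ↦ ?_ using 1
    · field_simp
      ring
    · have hξ2 : r ^ 2 / 2 ≤ ξ := by nlinarith [hξ.1]
      rw [norm_kernelIntegrand, abs_of_nonneg (by nlinarith)]
      exact rpow_neg_le_two_div hα hr hξ2
  have hright : HasIntegralBoundOn (kernelIntegrand α σ t 1) (Ici (r ^ 2 + r))
      (10 / phaseGap σ) :=
    hasIntegralBoundOn_kernelIntegrand_near_stationary hα hσ hr htσ ordConnected_Ici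
      (fun ξ hξ ↦ by nlinarith [mem_Ici.1 hξ])
      fun ξ hξ ↦ le_abs.2 (Or.inl (by linarith [mem_Ici.1 hξ]))
  exact horigin.Icc_union_Ici hint zero_le_one <| hlow.Icc_union_Ici hint (by nlinarith) <|
    hleft.Icc_union_Ici hint (by nlinarith) <| hmid.Icc_union_Ici hint (by linarith) hright

end StationaryPoint

theorem exists_hasIntegralBoundOn_kernelIntegrand_one (hα : 1 / 2 ≤ α) (hα1 : α < 1) (hσ : σ ≠ 1) :
    ∃ C, ∀ t, HasIntegralBoundOn (kernelIntegrand α σ t 1) (Ici 0) C := by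
  refine ⟨max (1 / (1 - α) + 5) (max (8 ^ (1 - α) / (1 - α) + 5 / phaseGap σ)
    (1 / (1 - α) + (10 / phaseGap σ + (10 / phaseGap σ +
      (4 + 10 / phaseGap σ))))), fun t ↦ ?_⟩
  rcases le_or_gt (t * σ) 0 with htσ | htσ
  · exact (hasIntegralBoundOn_kernelIntegrand_of_mul_nonpos (by linarith) hα1 htσ).mono
      (le_max_left _ _)
  · obtain ⟨r, hr, htσr⟩ : ∃ r > 0, t * σ = (r ^ 2) ^ (-(σ - 1)) := by
      refine ⟨√((t * σ) ^ (-(σ - 1))⁻¹), by positivity, ?_⟩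
      rw [Real.sq_sqrt (by positivity), Real.rpow_inv_rpow htσ.le]
      exact neg_ne_zero.2 (sub_ne_zero.2 hσ)
    rcases le_total r 2 with hr2 | hr2
    · exact (hasIntegralBoundOn_kernelIntegrand_of_stationary_le (by linarith) hα1 hσ hr hr2
        htσr).mono ((le_max_left _ _).trans (le_max_right _ _))
    · exact (hasIntegralBoundOn_kernelIntegrand_of_le_stationary hα hα1 hσ hr2 htσr).mono
        ((le_max_right _ _).trans (le_max_right _ _))

end KernelAtOne

section KernelBound

variable {α σ t x ξ C N : ℝ}

lemma kernelIntegrand_neg : kernelIntegrand α σ t x (-ξ) = kernelIntegrand α σ t (-x) ξ := by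
  simp only [kernelIntegrand, dispersiveWave, abs_neg, mul_neg, neg_mul]

lemma conj_kernelIntegrand :
    conj (kernelIntegrand α σ t x ξ) = kernelIntegrand α σ (-t) (-x) ξ := by
  rw [kernelIntegrand, map_mul, conj_ofReal, conj_dispersiveWave, kernelIntegrand]

lemma kernelIntegrand_eq_rpow_mul (hx : 0 < x) :
    kernelIntegrand α σ t x ξ = ((x ^ α : ℝ) : ℂ) * kernelIntegrand α σ (t / x ^ σ) 1 (x * ξ) := by
  have hamp : |ξ| ^ (-α) = x ^ α * |x * ξ| ^ (-α) := by
    rw [abs_mul, abs_of_pos hx, Real.mul_rpow hx.le (abs_nonneg ξ), ← mul_assoc, ← Real.rpow_add hx,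
      add_neg_cancel, Real.rpow_zero, one_mul]
  have hphase : x * ξ - t * |ξ| ^ σ = 1 * (x * ξ) - t / x ^ σ * |x * ξ| ^ σ := by
    rw [abs_mul, abs_of_pos hx, Real.mul_rpow hx.le (abs_nonneg ξ)]
    field_simp
  rw [kernelIntegrand, hamp, Complex.ofReal_mul, mul_assoc, dispersiveWave, hphase, kernelIntegrand,
    dispersiveWave]

lemma norm_integral_zero_kernelIntegrand_le_of_pos
    (hC : ∀ t, HasIntegralBoundOn (kernelIntegrand α σ t 1) (Ici 0) C) (hx : 0 < x) (hN : 0 ≤ N) :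
    ‖∫ ξ in 0..N, kernelIntegrand α σ t x ξ‖ ≤ C * |x| ^ (-(1 - α)) := by
  have hNx : 0 ≤ x * N := by positivity
  calc ‖∫ ξ in 0..N, kernelIntegrand α σ t x ξ‖
      = x ^ α * x⁻¹ * ‖∫ ξ in 0..x * N, kernelIntegrand α σ (t / x ^ σ) 1 ξ‖ := by
        simp only [kernelIntegrand_eq_rpow_mul hx]
        rw [intervalIntegral.integral_const_mul, intervalIntegral.integral_comp_mul_left _ hx.ne',
          mul_zero, norm_mul, norm_smul, norm_real, Real.norm_of_nonneg (by positivity),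
          Real.norm_of_nonneg (by positivity), mul_assoc]
    _ ≤ x ^ α * x⁻¹ * C := by
        gcongr
        exact hC _ 0 self_mem_Ici _ hNx hNx
    _ = C * |x| ^ (-(1 - α)) := by
        rw [abs_of_pos hx, neg_sub, Real.rpow_sub_one hx.ne']
        ring

lemma norm_integral_zero_kernelIntegrand_le
    (hC : ∀ t, HasIntegralBoundOn (kernelIntegrand α σ t 1) (Ici 0) C) (hx : x ≠ 0) (hN : 0 ≤ N) :
    ‖∫ ξ in 0..N, kernelIntegrand α σ t x ξ‖ ≤ C * |x| ^ (-(1 - α)) := by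
  rcases hx.lt_or_gt with hx | hx
  · have hneg := norm_integral_zero_kernelIntegrand_le_of_pos (t := -t) hC (neg_pos.2 hx) hN
    simp only [← conj_kernelIntegrand, intervalIntegral.integral_of_le hN, integral_conj,
      RCLike.norm_conj, abs_neg] at hneg
    rwa [intervalIntegral.integral_of_le hN]
  · exact norm_integral_zero_kernelIntegrand_le_of_pos hC hx hN

theorem exists_norm_integral_kernelIntegrand_le (hα : 1 / 2 ≤ α) (hα1 : α < 1) (hσ : σ ≠ 1) :
    ∃ C, ∀ t x N, x ≠ 0 → 0 ≤ N →
      ‖∫ ξ in -N..N, kernelIntegrand α σ t x ξ‖ ≤ C * |x| ^ (-(1 - α)) := by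
  obtain ⟨C, hC⟩ := exists_hasIntegralBoundOn_kernelIntegrand_one hα hα1 hσ
  refine ⟨2 * C, fun t x N hx hN ↦ ?_⟩
  have hreflect : ∫ ξ in -N..0, kernelIntegrand α σ t x ξ =
      ∫ ξ in 0..N, kernelIntegrand α σ t (-x) ξ := by
    simp only [← kernelIntegrand_neg]
    rw [intervalIntegral.integral_comp_neg, neg_zero]
  have hleft := norm_integral_zero_kernelIntegrand_le (t := t) hC (neg_ne_zero.2 hx) hN
  rw [abs_neg] at hleft
  rw [← intervalIntegral.integral_add_adjacent_intervals
    (intervalIntegrable_kernelIntegrand hα1 (-N) 0) (intervalIntegrable_kernelIntegrand hα1 0 N),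
    hreflect]
  linarith [norm_add_le_of_le hleft (norm_integral_zero_kernelIntegrand_le (t := t) hC hx hN)]

theorem exists_enorm_integral_kernelIntegrand_le (hα : 1 / 2 ≤ α) (hα1 : α < 1) (hσ : σ ≠ 1) :
    ∃ C : ℝ≥0, ∀ t x N, 0 ≤ N →
      ‖∫ ξ in -N..N, kernelIntegrand α σ t x ξ‖ₑ ≤ C * ‖x‖ₑ ^ (-(1 - α)) := by
  obtain ⟨C, hC⟩ := exists_norm_integral_kernelIntegrand_le hα hα1 hσ
  refine ⟨C.toNNReal + 1, fun t x N hN ↦ ?_⟩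
  rcases eq_or_ne x 0 with rfl | hx
  · rw [enorm_zero, ENNReal.zero_rpow_of_neg (by linarith), ENNReal.mul_top (by simp)]
    exact le_top
  · have habs : 0 < |x| := abs_pos.2 hx
    rw [Real.enorm_eq_ofReal_abs, ENNReal.ofReal_rpow_of_pos habs, ← ofReal_coe_nnreal,
      ← ENNReal.ofReal_mul NNReal.zero_le_coe, ← ofReal_norm]
    refine ENNReal.ofReal_le_ofReal ((hC t x N hx hN).trans ?_)
    gcongr
    push_cast
    linarith [Real.le_coe_toNNReal C]

end KernelBound

section FractionalIntegration

section PowerIntegrals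

variable {l : ℝ} {R : ℝ≥0}

lemma setLIntegral_preimage_abs {S : Set ℝ} (hS : MeasurableSet S) (φ : ℝ → ℝ≥0∞) :
    ∫⁻ x in abs ⁻¹' S, φ |x| = 2 * ∫⁻ x in Ioi 0 ∩ S, φ x := by
  set ψ := S.indicator φ with hψ
  have hpos : ∫⁻ x in Ioi 0, ψ |x| = ∫⁻ x in Ioi 0, ψ x :=
    setLIntegral_congr_fun measurableSet_Ioi fun x hx ↦ congrArg ψ (abs_of_pos hx)
  have hneg : ∫⁻ x in Iic 0, ψ |x| = ∫⁻ x in Ioi 0, ψ |x| := by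
    rw [setLIntegral_congr Iio_ae_eq_Iic.symm, ← lintegral_indicator measurableSet_Iio,
      ← lintegral_indicator measurableSet_Ioi, ← lintegral_neg_eq_self]
    simp only [indicator_apply, mem_Iio, mem_Ioi, Left.neg_neg_iff, abs_neg]
  calc ∫⁻ x in abs ⁻¹' S, φ |x| = ∫⁻ x, ψ |x| :=
        (lintegral_indicator (measurable_norm hS) fun x ↦ φ |x|).symm
    _ = 2 * ∫⁻ x in Ioi 0, ψ x := by
        rw [← lintegral_add_compl _ (measurableSet_Ioi (a := (0 : ℝ))), compl_Ioi, hneg, hpos,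
          two_mul]
    _ = 2 * ∫⁻ x in Ioi 0 ∩ S, φ x := by
        rw [hψ, setLIntegral_indicator hS, inter_comm]

lemma setLIntegral_abs_lt_enorm_rpow_neg (hl : l < 1) :
    ∫⁻ x : ℝ in abs ⁻¹' Iio (R : ℝ), ‖x‖ₑ ^ (-l) =
      ENNReal.ofReal (2 / (1 - l)) * (R : ℝ≥0∞) ^ (1 - l) := by
  have hl' : 0 < 1 - l := sub_pos.2 hl
  simp only [Real.enorm_eq_ofReal_abs]
  rw [setLIntegral_preimage_abs measurableSet_Iio fun r ↦ ENNReal.ofReal r ^ (-l), Ioi_inter_Iio,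
    setLIntegral_congr_fun measurableSet_Ioo
      (fun r hr ↦ ENNReal.ofReal_rpow_of_pos (p := -l) hr.1),
    setLIntegral_congr Ioo_ae_eq_Ioc, ← ofReal_integral_eq_lintegral_ofReal,
    ← intervalIntegral.integral_of_le R.coe_nonneg, integral_rpow (Or.inl (by linarith)),
    Real.zero_rpow (by linarith), sub_zero, neg_add_eq_sub, ← ENNReal.ofReal_ofNat,
    ← ENNReal.ofReal_mul zero_le_two, ← ENNReal.ofReal_coe_nnreal,
    ENNReal.ofReal_rpow_of_nonneg R.coe_nonneg hl'.le, ← ENNReal.ofReal_mul (by positivity)]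
  · congr 1
    ring
  · exact (intervalIntegrable_iff_integrableOn_Ioc_of_le R.coe_nonneg).1
      (intervalIntegral.intervalIntegrable_rpow' (by linarith))
  · filter_upwards [ae_restrict_mem measurableSet_Ioc] with r hr using Real.rpow_nonneg hr.1.le _

lemma setLIntegral_le_abs_enorm_rpow_neg_two (hR : 0 < R) :
    ∫⁻ x : ℝ in abs ⁻¹' Ici (R : ℝ), ‖x‖ₑ ^ (-2 : ℝ) = 2 * (R : ℝ≥0∞)⁻¹ := by
  have hR' : (0 : ℝ) < R := hR
  have hsub : Ioi 0 ∩ Ici (R : ℝ) = Ici (R : ℝ) :=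
    inter_eq_right.2 fun r hr ↦ hR'.trans_le hr
  simp only [Real.enorm_eq_ofReal_abs]
  rw [setLIntegral_preimage_abs measurableSet_Ici fun r ↦ ENNReal.ofReal r ^ (-2 : ℝ), hsub,
    setLIntegral_congr_fun measurableSet_Ici
      (fun r hr ↦ ENNReal.ofReal_rpow_of_pos (p := -2) (hR'.trans_le hr)),
    setLIntegral_congr Ioi_ae_eq_Ici.symm, ← ofReal_integral_eq_lintegral_ofReal,
    integral_Ioi_rpow_of_lt (by norm_num) hR', ← ENNReal.ofReal_coe_nnreal (p := R),
    ← ENNReal.ofReal_inv_of_pos hR']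
  · norm_num [Real.rpow_neg_one]
  · exact integrableOn_Ioi_rpow_of_lt (by norm_num) hR'
  · filter_upwards [ae_restrict_mem measurableSet_Ioi] with r hr
    exact Real.rpow_nonneg (hR'.trans hr).le _

end PowerIntegrals

section HardyLittlewoodSobolev

variable {p q : ℝ} {h : ℝ → ℝ≥0} {B R S : ℝ≥0}

lemma lintegral_truncation_mul_enorm_rpow_neg_le (hp : 2 < p) (hpq : q.HolderConjugate p)
    (hh : Measurable h) (hR : 0 < R) :
    ∫⁻ x, (if h x ≤ B then (h x : ℝ≥0∞) else 0) * ‖x‖ₑ ^ (-(2 / p)) ≤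
      B * (ENNReal.ofReal (2 / (1 - 2 / p)) * (R : ℝ≥0∞) ^ (1 - 2 / p)) +
        (∫⁻ x, (h x : ℝ≥0∞) ^ q) ^ (1 / q) * (2 * (R : ℝ≥0∞)⁻¹) ^ (1 / p) := by
  have hball : MeasurableSet (abs ⁻¹' Iio (R : ℝ)) := measurable_norm measurableSet_Iio
  have hcompl : (abs ⁻¹' Iio (R : ℝ))ᶜ = abs ⁻¹' Ici (R : ℝ) := by
    rw [← preimage_compl, compl_Iio]
  rw [← lintegral_add_compl _ hball, hcompl]
  refine add_le_add ?near ?far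
  case near =>
    rw [← setLIntegral_abs_lt_enorm_rpow_neg ((div_lt_one (by linarith)).2 hp),
      ← lintegral_const_mul' _ _ coe_ne_top]
    gcongr with x
    split_ifs with hxB
    · exact_mod_cast hxB
    · exact zero_le
  case far =>
    calc ∫⁻ x in abs ⁻¹' Ici (R : ℝ), (if h x ≤ B then (h x : ℝ≥0∞) else 0) * ‖x‖ₑ ^ (-(2 / p))
        ≤ ∫⁻ x in abs ⁻¹' Ici (R : ℝ), (h x : ℝ≥0∞) * ‖x‖ₑ ^ (-(2 / p)) := by
          gcongr with x
          split_ifs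
          exacts [le_rfl, zero_le]
      _ ≤ (∫⁻ x in abs ⁻¹' Ici (R : ℝ), (h x : ℝ≥0∞) ^ q) ^ (1 / q) *
            (∫⁻ x in abs ⁻¹' Ici (R : ℝ), (‖x‖ₑ ^ (-(2 / p))) ^ p) ^ (1 / p) :=
          ENNReal.lintegral_mul_le_Lp_mul_Lq _ hpq (by fun_prop) (by fun_prop)
      _ ≤ _ := by
          have hexp : -(2 / p) * p = -2 := by field_simp [hpq.symm.ne_zero]
          simp only [← ENNReal.rpow_mul, hexp, setLIntegral_le_abs_enorm_rpow_neg_two hR]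
          gcongr
          · exact hpq.one_div_nonneg
          · exact Measure.restrict_le_self

lemma mul_rpow_add_rpow_mul_eq (hpq : q.HolderConjugate p) (hB : 0 < B) (hS : 0 < S) (c : ℝ≥0) :
    B * (c * (S * B ^ (-q)) ^ (1 - 2 / p)) + S ^ (1 / q) * (2 * (S * B ^ (-q))⁻¹) ^ (1 / p) =
      (c + 2 ^ (1 / p)) * (B ^ (q - 1) * S ^ (1 - 2 / p)) := by
  have hq : q * p⁻¹ = q - 1 := by
    rw [← hpq.one_sub_inv, mul_sub, mul_one, mul_inv_cancel₀ hpq.ne_zero]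
  have hnear : B * (S * B ^ (-q)) ^ (1 - 2 / p) = B ^ (q - 1) * S ^ (1 - 2 / p) := by
    have hexp : 1 + -q * (1 - 2 / p) = q - 1 := by
      linear_combination 2 * hq
    rw [NNReal.mul_rpow, ← NNReal.rpow_mul, mul_left_comm, ← hexp, NNReal.rpow_add hB.ne',
      NNReal.rpow_one, mul_comm]
  have hfar : S ^ (1 / q) * (S * B ^ (-q))⁻¹ ^ (1 / p) = B ^ (q - 1) * S ^ (1 - 2 / p) := by
    have hexp : 1 / q + -(1 / p) = 1 - 2 / p := by
      linear_combination hpq.inv_add_inv_eq_one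
    rw [mul_inv, NNReal.mul_rpow, NNReal.inv_rpow, ← NNReal.rpow_neg, ← NNReal.rpow_neg, neg_neg,
      ← mul_assoc, ← NNReal.rpow_add hS.ne', hexp, ← NNReal.rpow_mul, one_div, hq, mul_comm]
  rw [mul_left_comm, hnear, NNReal.mul_rpow, mul_left_comm (S ^ (1 / q)), hfar, add_mul]

/-- The constant produced by optimising the splitting radius in the Hardy–Littlewood–Sobolev
inequality: the first summand comes from short distances, the second from long ones. -/
noncomputable def hlsConst (p : ℝ) : ℝ≥0 := (2 / (1 - 2 / p)).toNNReal + 2 ^ (1 / p)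

lemma lintegral_truncation_mul_enorm_sub_rpow_neg_le (hp : 2 < p) (hpq : q.HolderConjugate p)
    (hh : Measurable h) (hB : 0 < B) (hS : 0 < S) (hhS : ∫⁻ x, (h x : ℝ≥0∞) ^ q = S) (y : ℝ) :
    ∫⁻ x, (if h x ≤ B then (h x : ℝ≥0∞) else 0) * ‖x - y‖ₑ ^ (-(2 / p)) ≤
      hlsConst p * (B ^ (q - 1) * S ^ (1 - 2 / p) : ℝ≥0) := by
  have hR : 0 < S * B ^ (-q) := mul_pos hS (NNReal.rpow_pos hB)
  have hl : 0 ≤ 1 - 2 / p := sub_nonneg.2 ((div_le_one (by linarith)).2 hp.le)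
  have hshift : ∫⁻ x, (h (x + y) : ℝ≥0∞) ^ q = S := by
    rw [lintegral_add_right_eq_self fun x ↦ (h x : ℝ≥0∞) ^ q, hhS]
  -- The radius `R = S * B ^ (-q)` balances the near and far parts of the integral.
  rw [hlsConst, ← ENNReal.coe_mul, ← mul_rpow_add_rpow_mul_eq hpq hB hS,
    ← lintegral_add_right_eq_self _ y]
  generalize S * B ^ (-q) = R at hR
  simp only [add_sub_cancel_right]
  refine (lintegral_truncation_mul_enorm_rpow_neg_le hp hpq (by fun_prop) hR).trans_eq ?_
  push_cast [hshift, ENNReal.coe_rpow_of_nonneg _ hl, ENNReal.coe_inv hR.ne',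
    ENNReal.coe_rpow_of_nonneg _ hpq.one_div_nonneg,
    ENNReal.coe_rpow_of_nonneg _ hpq.symm.one_div_nonneg]
  rfl

lemma lintegral_lintegral_mul_le_two_mul_truncation {X : Type*} [MeasurableSpace X] {μ : Measure X}
    [SFinite μ] {h : X → ℝ≥0} (hh : Measurable h) {k : X → X → ℝ≥0∞}
    (hk : Measurable (Function.uncurry k)) (hsymm : ∀ x y, k x y = k y x) :
    ∫⁻ x, ∫⁻ y, h x * h y * k x y ∂μ ∂μ ≤
      2 * ∫⁻ y, h y * ∫⁻ x, (if h x ≤ h y then (h x : ℝ≥0∞) else 0) * k x y ∂μ ∂μ := by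
  set Φ : X → X → ℝ≥0∞ := fun x y ↦ h y * ((if h x ≤ h y then (h x : ℝ≥0∞) else 0) * k x y) with hΦ
  have hΦm : Measurable (Function.uncurry Φ) := by
    refine Measurable.mul (by fun_prop) (Measurable.mul ?_ hk)
    exact Measurable.ite (measurableSet_le (by fun_prop) (by fun_prop)) (by fun_prop)
      measurable_const
  have hsplit (x y) : h x * h y * k x y ≤ Φ x y + Φ y x := by
    rcases le_total (h x) (h y) with hxy | hyx
    · refine le_add_right (le_of_eq ?_)
      simp only [hΦ, if_pos hxy]
      rw [mul_comm (h x : ℝ≥0∞), mul_assoc]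
    · refine le_add_left (le_of_eq ?_)
      simp only [hΦ, if_pos hyx]
      rw [mul_assoc, hsymm]
  calc ∫⁻ x, ∫⁻ y, h x * h y * k x y ∂μ ∂μ
      ≤ ∫⁻ x, ∫⁻ y, Φ x y + Φ y x ∂μ ∂μ := by gcongr; exact hsplit _ _
    _ = (∫⁻ x, ∫⁻ y, Φ x y ∂μ ∂μ) + ∫⁻ x, ∫⁻ y, Φ y x ∂μ ∂μ := by
        rw [← lintegral_add_left (Measurable.lintegral_prod_right hΦm)]
        exact lintegral_congr fun x ↦ lintegral_add_left hΦm.of_uncurry_left _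
    _ = 2 * ∫⁻ y, ∫⁻ x, Φ x y ∂μ ∂μ := by
        rw [lintegral_lintegral_swap hΦm.aemeasurable, two_mul]
    _ = _ := by simp only [hΦ, lintegral_const_mul' _ _ coe_ne_top]

lemma lintegral_mul_truncation_le (hp : 2 < p) (hpq : q.HolderConjugate p) (hh : Measurable h)
    (hS : 0 < S) (hhS : ∫⁻ x, (h x : ℝ≥0∞) ^ q = S) :
    ∫⁻ y, h y * ∫⁻ x, (if h x ≤ h y then (h x : ℝ≥0∞) else 0) * ‖x - y‖ₑ ^ (-(2 / p)) ≤
      hlsConst p * (S : ℝ≥0∞) ^ (2 / q) := by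
  have hpointwise (y) :
      h y * ∫⁻ x, (if h x ≤ h y then (h x : ℝ≥0∞) else 0) * ‖x - y‖ₑ ^ (-(2 / p)) ≤
        (hlsConst p * S ^ (1 - 2 / p) : ℝ≥0) * (h y : ℝ≥0∞) ^ q := by
    rcases eq_zero_or_pos (h y) with hy | hy
    · rw [hy, ENNReal.coe_zero, zero_mul]
      exact zero_le
    · refine (mul_le_mul_right
        (lintegral_truncation_mul_enorm_sub_rpow_neg_le hp hpq hh hy hS hhS y) _).trans_eq ?_
      have hpow : h y ^ q = h y * h y ^ (q - 1) := by
        rw [← NNReal.rpow_one_add' (by simpa using hpq.ne_zero), add_sub_cancel]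
      rw [← ENNReal.coe_rpow_of_nonneg _ hpq.nonneg, hpow]
      norm_cast
      ring
  have hexp : 1 - 2 / p + 1 = 2 / q := by
    linear_combination -2 * hpq.inv_add_inv_eq_one
  refine (lintegral_mono hpointwise).trans_eq ?_
  rw [lintegral_const_mul' _ _ coe_ne_top, hhS, ← hexp, ← ENNReal.coe_rpow_of_ne_zero hS.ne',
    NNReal.rpow_add hS.ne', NNReal.rpow_one, ENNReal.coe_mul, ENNReal.coe_mul, mul_assoc]

theorem lintegral_lintegral_mul_enorm_sub_rpow_neg_le (hp : 2 < p) (hpq : q.HolderConjugate p)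
    (hh : Measurable h) :
    ∫⁻ x, ∫⁻ y, h x * h y * ‖x - y‖ₑ ^ (-(2 / p)) ≤
      2 * hlsConst p * (∫⁻ x, (h x : ℝ≥0∞) ^ q) ^ (2 / q) := by
  have hq : 0 < q := hpq.pos
  have hconst : hlsConst p ≠ 0 := (add_pos_of_nonneg_of_pos zero_le (by positivity)).ne'
  rcases eq_or_ne (∫⁻ x, (h x : ℝ≥0∞) ^ q) ∞ with htop | hfin
  · rw [htop, ENNReal.top_rpow_of_pos (by positivity), ENNReal.mul_top (by simpa using hconst)]
    exact le_top
  rcases eq_or_ne (∫⁻ x, (h x : ℝ≥0∞) ^ q) 0 with hzero | hpos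
  · have hae : ∀ᵐ x, (h x : ℝ≥0∞) = 0 := by
      filter_upwards [(lintegral_eq_zero_iff (by fun_prop)).1 hzero] with x hx
      exact (ENNReal.rpow_eq_zero_iff_of_pos hq).1 hx
    refine (lintegral_eq_zero_of_ae_eq_zero ?_).trans_le zero_le
    filter_upwards [hae] with x hx
    simp only [hx, zero_mul, lintegral_zero, Pi.zero_apply]
  have hsymm (x y : ℝ) : ‖x - y‖ₑ ^ (-(2 / p)) = ‖y - x‖ₑ ^ (-(2 / p)) := by rw [enorm_sub_rev]
  have hS := (ENNReal.coe_toNNReal hfin).symm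
  rw [mul_assoc, hS]
  exact (lintegral_lintegral_mul_le_two_mul_truncation hh (by fun_prop) hsymm).trans
    (mul_le_mul_right (lintegral_mul_truncation_le hp hpq hh (ENNReal.toNNReal_pos hpos hfin) hS) _)

end HardyLittlewoodSobolev

end FractionalIntegration

section ConverseHolder

variable {X : Type*} [MeasurableSpace X] {μ : Measure X} {p q : ℝ}

lemma rpow_one_div_le_of_le_mul_rpow (hpq : p.HolderConjugate q) {a b : ℝ≥0∞} (ha : a ≠ ∞)
    (hab : a ≤ b * a ^ (1 / q)) : a ^ (1 / p) ≤ b := by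
  rcases eq_or_ne a 0 with rfl | ha0
  · rw [ENNReal.zero_rpow_of_pos hpq.one_div_pos]
    exact zero_le
  have hsplit : a = a ^ (1 / p) * a ^ (1 / q) := by
    rw [← ENNReal.rpow_add _ _ ha0 ha, one_div, one_div, hpq.inv_add_inv_eq_one, ENNReal.rpow_one]
  refine (ENNReal.mul_le_mul_iff_left ?_ ?_).1 (hsplit.symm.trans_le hab)
  · exact (ENNReal.rpow_pos (pos_iff_ne_zero.2 ha0) ha).ne'
  · exact ENNReal.rpow_ne_top_of_nonneg hpq.symm.one_div_nonneg ha

lemma lintegral_simpleFunc_rpow_ne_top {r : ℝ} (hr : 0 < r) (g : SimpleFunc X ℝ≥0)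
    (hg : ∫⁻ x, g x ∂μ ≠ ∞) : ∫⁻ x, (g x ^ r : ℝ≥0) ∂μ ≠ ∞ := by
  have hsupp : g.FinMeasSupp μ := by
    rw [← SimpleFunc.FinMeasSupp.map_iff (g := ((↑) : ℝ≥0 → ℝ≥0∞)) ENNReal.coe_eq_zero]
    refine SimpleFunc.FinMeasSupp.of_lintegral_ne_top ?_
    rwa [← SimpleFunc.lintegral_eq_lintegral]
  have hrpow := hsupp.map (g := fun c : ℝ≥0 ↦ ((c ^ r : ℝ≥0) : ℝ≥0∞))
    (by rw [NNReal.zero_rpow hr.ne', ENNReal.coe_zero])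
  have hfin := hrpow.lintegral_lt_top (ae_of_all _ fun x ↦ coe_ne_top)
  rw [← SimpleFunc.lintegral_eq_lintegral] at hfin
  exact hfin.ne

theorem lintegral_rpow_le_of_forall_lintegral_mul_le [SigmaFinite μ] (hpq : p.HolderConjugate q)
    {f : X → ℝ≥0} {B : ℝ≥0∞}
    (hB : ∀ g : X → ℝ≥0, Measurable g → ∫⁻ x, g x ∂μ ≠ ∞ →
      ∫⁻ x, f x * g x ∂μ ≤ B * (∫⁻ x, (g x : ℝ≥0∞) ^ q ∂μ) ^ (1 / q)) :
    (∫⁻ x, (f x : ℝ≥0∞) ^ p ∂μ) ^ (1 / p) ≤ B := by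
  rw [one_div, ENNReal.rpow_inv_le_iff hpq.pos]
  refine le_of_forall_lt fun L hL ↦ ?_
  -- `f` need not be measurable, so instead of `f ^ (p - 1)` we test against `g ^ (1 / q)`.
  simp only [← ENNReal.coe_rpow_of_nonneg _ hpq.nonneg] at hL
  obtain ⟨g, hgf, hg, hLg⟩ := exists_lt_lintegral_simpleFunc_of_lt_lintegral hL
  have htest := hB (fun x ↦ g x ^ (1 / q)) (g.measurable.pow_const _)
    (lintegral_simpleFunc_rpow_ne_top hpq.symm.one_div_pos g hg.ne)
  have hroot (x) : (((g x ^ (1 / q) : ℝ≥0) : ℝ≥0∞)) ^ q = g x := by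
    rw [← ENNReal.coe_rpow_of_nonneg _ hpq.symm.nonneg, one_div,
      NNReal.rpow_inv_rpow hpq.symm.ne_zero]
  have hsplit (x) : (g x : ℝ≥0∞) ≤ f x * (g x ^ (1 / q) : ℝ≥0) := by
    have hgp : g x ^ (1 / p) ≤ f x := by
      rw [one_div, NNReal.rpow_inv_le_iff hpq.pos]
      exact hgf x
    have hsum : 1 / p + 1 / q = 1 := by rw [one_div, one_div, hpq.inv_add_inv_eq_one]
    rw [← ENNReal.coe_mul, ENNReal.coe_le_coe]
    calc g x = g x ^ (1 / p) * g x ^ (1 / q) := by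
          rw [← NNReal.rpow_add' (by rw [hsum]; exact one_ne_zero), hsum, NNReal.rpow_one]
      _ ≤ f x * g x ^ (1 / q) := by gcongr
  simp only [hroot] at htest
  have hgB := rpow_one_div_le_of_le_mul_rpow hpq hg.ne ((lintegral_mono hsplit).trans htest)
  rw [one_div, ENNReal.rpow_inv_le_iff hpq.pos] at hgB
  exact hLg.trans_le hgB

end ConverseHolder

section Linearization

variable {X T : Type*} {v : T → X → ℝ≥0∞}

lemma iSup_eq_iSup_partialSups_denseSeq [TopologicalSpace T] [TopologicalSpace.SeparableSpace T]
    [Nonempty T] (hcont : ∀ x, Continuous fun t ↦ v t x) (x : X) :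
    ⨆ t, v t x = ⨆ n, partialSups (fun k ↦ v (TopologicalSpace.denseSeq T k)) n x := by
  rw [← iSup_apply (f := fun n ↦ partialSups _ n), iSup_partialSups_eq, iSup_apply,
    ← (TopologicalSpace.denseRange_denseSeq T).ciSup' (hcont x), iSup_range' fun t ↦ v t x]

variable [MeasurableSpace X] {μ : Measure X}

lemma measurable_partialSups (hv : ∀ t, Measurable (v t)) (d : ℕ → T) (n : ℕ) :
    Measurable (partialSups (fun k ↦ v (d k)) n) := by
  rw [partialSups_eq_sup'_range]
  exact Finset.measurable_sup' _ fun k _ ↦ hv (d k)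

lemma exists_measurable_eq_partialSups [MeasurableSpace T] (hv : ∀ t, Measurable (v t)) (d : ℕ → T)
    (n : ℕ) :
    ∃ τ : X → T, Measurable τ ∧ ∀ x, v (τ x) x = partialSups (fun k ↦ v (d k)) n x := by
  classical
  induction n with
  | zero => exact ⟨fun _ ↦ d 0, measurable_const, fun x ↦ by rw [partialSups_zero]⟩
  | succ n ih =>
    obtain ⟨τ, hτ, hvτ⟩ := ih
    refine ⟨fun x ↦ if partialSups (fun k ↦ v (d k)) n x ≤ v (d (n + 1)) x then d (n + 1) else τ x,
      Measurable.ite (measurableSet_le (measurable_partialSups hv d n) (hv _)) measurable_const hτ,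
      fun x ↦ ?_⟩
    rw [partialSups_add_one, Pi.sup_apply]
    beta_reduce
    split_ifs with hx
    · rw [sup_of_le_right hx]
    · rw [hvτ, sup_of_le_left (le_of_not_ge hx)]

theorem lintegral_iSup_rpow_le_of_forall_measurable_selection [TopologicalSpace T]
    [TopologicalSpace.SeparableSpace T] [Nonempty T] [MeasurableSpace T]
    (hv : ∀ t, Measurable (v t)) (hcont : ∀ x, Continuous fun t ↦ v t x) {p : ℝ} (hp : 0 < p)
    {B : ℝ≥0∞} (hB : ∀ τ : X → T, Measurable τ → (∫⁻ x, v (τ x) x ^ p ∂μ) ^ (1 / p) ≤ B) :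
    (∫⁻ x, (⨆ t, v t x) ^ p ∂μ) ^ (1 / p) ≤ B := by
  set d := TopologicalSpace.denseSeq T
  have hsup (x) : (⨆ t, v t x) ^ p = ⨆ n, partialSups (fun k ↦ v (d k)) n x ^ p := by
    rw [iSup_eq_iSup_partialSups_denseSeq hcont]
    exact (ENNReal.orderIsoRpow p hp).map_iSup _
  have hmono : Monotone fun n x ↦ partialSups (fun k ↦ v (d k)) n x ^ p := fun m n hmn x ↦
    ENNReal.rpow_le_rpow ((partialSups fun k ↦ v (d k)).monotone hmn x) hp.le
  simp only [hsup]
  rw [lintegral_iSup (fun n ↦ (measurable_partialSups hv d n).pow_const p) hmono, one_div,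
    ENNReal.rpow_inv_le_iff hp]
  refine iSup_le fun n ↦ ?_
  obtain ⟨τ, hτ, hvτ⟩ := exists_measurable_eq_partialSups hv d n
  simp only [← hvτ]
  rw [← ENNReal.rpow_inv_le_iff hp, ← one_div]
  exact hB τ hτ

end Linearization

section Propagator

/-- The superposition of the waves `dispersiveWave σ t x ξ` with amplitudes `G ξ`, which is the
fractional Schrödinger evolution of `f` when `G = f̂` (up to the normalisation `2π`). -/
noncomputable def propagator (σ : ℝ) (G : ℝ → ℂ) (t x : ℝ) : ℂ :=
  ∫ ξ, dispersiveWave σ t x ξ * G ξ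

/-- The transpose, for the bilinear pairing `∫ h u`, of the linearised maximal operator
`G ↦ (x ↦ propagator σ G (τ x) x)`. -/
noncomputable def propagatorTranspose (σ : ℝ) (τ : ℝ → ℝ) (h : ℝ → ℂ) (ξ : ℝ) : ℂ :=
  ∫ x, h x * dispersiveWave σ (τ x) x ξ

variable {σ : ℝ} {τ : ℝ → ℝ} {h G : ℝ → ℂ}

lemma measurable_propagator (hτ : Measurable τ) (hG : Measurable G) :
    Measurable fun x ↦ propagator σ G (τ x) x := by
  have hwave : Measurable fun z : ℝ × ℝ ↦ dispersiveWave σ (τ z.1) z.1 z.2 :=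
    measurable_dispersiveWave (hτ.comp measurable_fst) measurable_fst measurable_snd
  exact (hwave.mul (hG.comp measurable_snd)).stronglyMeasurable.integral_prod_right.measurable

lemma measurable_propagatorTranspose (hτ : Measurable τ) (hh : Measurable h) :
    Measurable (propagatorTranspose σ τ h) := by
  have hwave : Measurable fun z : ℝ × ℝ ↦ dispersiveWave σ (τ z.2) z.2 z.1 :=
    measurable_dispersiveWave (hτ.comp measurable_snd) measurable_snd measurable_fst
  exact ((hh.comp measurable_snd).mul hwave).stronglyMeasurable.integral_prod_right.measurable

lemma norm_propagator_le (t x : ℝ) : ‖propagator σ G t x‖ ≤ ∫ ξ, ‖G ξ‖ := by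
  refine (norm_integral_le_integral_norm _).trans_eq ?_
  simp only [norm_mul, norm_dispersiveWave, one_mul]

lemma continuous_propagator (hG : Integrable G) (x : ℝ) :
    Continuous fun t ↦ propagator σ G t x := by
  refine continuous_of_dominated (bound := fun ξ ↦ ‖G ξ‖) (fun t ↦ ?_) (fun t ↦ ?_) hG.norm ?_
  · have hwave : Measurable (dispersiveWave σ t x) :=
      measurable_dispersiveWave measurable_const measurable_const measurable_id
    exact hwave.aestronglyMeasurable.mul hG.aestronglyMeasurable
  · refine ae_of_all _ fun ξ ↦ ?_
    rw [norm_mul, norm_dispersiveWave, one_mul]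
  · refine ae_of_all _ fun ξ ↦ ?_
    unfold dispersiveWave
    fun_prop

lemma integral_mul_propagator (hτ : Measurable τ) (hh : Integrable h) (hG : Integrable G) :
    ∫ x, h x * propagator σ G (τ x) x = ∫ ξ, propagatorTranspose σ τ h ξ * G ξ := by
  have hwave : Measurable fun z : ℝ × ℝ ↦ dispersiveWave σ (τ z.1) z.1 z.2 :=
    measurable_dispersiveWave (hτ.comp measurable_fst) measurable_fst measurable_snd
  have hint : Integrable (Function.uncurry fun x ξ ↦ h x * dispersiveWave σ (τ x) x ξ * G ξ)
      (volume.prod volume) := by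
    refine (hh.mul_prod hG).mono ?_ (ae_of_all _ fun z ↦ ?_)
    · exact (hh.aestronglyMeasurable.comp_fst.mul hwave.aestronglyMeasurable).mul
        hG.aestronglyMeasurable.comp_snd
    · simp only [Function.uncurry, norm_mul, norm_dispersiveWave, mul_one, le_refl]
  simp only [propagator, propagatorTranspose, ← integral_const_mul, ← integral_mul_const,
    ← mul_assoc]
  exact integral_integral_swap hint

section TTStar

variable {α N : ℝ}

lemma ofReal_abs_rpow_mul_norm_propagatorTranspose_sq (ξ : ℝ) :
    ((|ξ| ^ (-α) * ‖propagatorTranspose σ τ h ξ‖ ^ 2 : ℝ) : ℂ) =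
      ∫ z : ℝ × ℝ, h z.1 * conj (h z.2) *
        kernelIntegrand α σ (τ z.1 - τ z.2) (z.1 - z.2) ξ := by
  have hsplit (z : ℝ × ℝ) :
      h z.1 * conj (h z.2) * kernelIntegrand α σ (τ z.1 - τ z.2) (z.1 - z.2) ξ =
        ((|ξ| ^ (-α) : ℝ) : ℂ) * (h z.1 * dispersiveWave σ (τ z.1) z.1 ξ *
          conj (h z.2 * dispersiveWave σ (τ z.2) z.2 ξ)) := by
    rw [kernelIntegrand, ← dispersiveWave_mul_conj, map_mul]
    ring
  simp only [hsplit]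
  rw [integral_const_mul, Measure.volume_eq_prod,
    integral_prod_mul (fun x ↦ h x * dispersiveWave σ (τ x) x ξ)
      fun y ↦ conj (h y * dispersiveWave σ (τ y) y ξ), integral_conj, Complex.mul_conj,
    Complex.normSq_eq_norm_sq, Complex.ofReal_mul]
  rfl

lemma integrable_mul_conj_mul_kernelIntegrand (hα : α < 1) (hτ : Measurable τ)
    (hh : Integrable h) :
    Integrable (Function.uncurry fun (ξ : ℝ) (z : ℝ × ℝ) ↦ h z.1 * conj (h z.2) *
      kernelIntegrand α σ (τ z.1 - τ z.2) (z.1 - z.2) ξ)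
      ((volume.restrict (Ioc (-N) N)).prod volume) := by
  have hpow : IntegrableOn (fun ξ : ℝ ↦ |ξ| ^ (-α)) (Ioc (-N) N) :=
    ((locallyIntegrable_abs_rpow_neg hα).integrableOn_isCompact isCompact_Icc).mono_set
      Ioc_subset_Icc_self
  have hconj : Integrable fun x ↦ conj (h x) :=
    (ContinuousLinearEquiv.integrable_comp_iff conjCLE).2 hh
  have hprod : Integrable fun z : ℝ × ℝ ↦ h z.1 * conj (h z.2) := hh.mul_prod hconj
  refine (hpow.mul_prod hprod.norm).mono ?_ (ae_of_all _ fun w ↦ ?_)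
  · have hkernel : Measurable fun w : ℝ × ℝ × ℝ ↦
        kernelIntegrand α σ (τ w.2.1 - τ w.2.2) (w.2.1 - w.2.2) w.1 :=
      Measurable.mul (by fun_prop) (measurable_dispersiveWave (by fun_prop) (by fun_prop)
        (by fun_prop))
    exact hprod.aestronglyMeasurable.comp_snd.mul hkernel.aestronglyMeasurable
  · simp only [Function.uncurry, norm_mul, norm_kernelIntegrand, norm_norm]
    rw [Real.norm_of_nonneg (by positivity), mul_comm]

lemma lintegral_ofReal_eq_enorm_integral_ofReal {X : Type*} [MeasurableSpace X] {μ : Measure X}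
    {w : X → ℝ} (hw : Integrable w μ) (hw0 : ∀ x, 0 ≤ w x) :
    ∫⁻ x, ENNReal.ofReal (w x) ∂μ = ‖∫ x, (w x : ℂ) ∂μ‖ₑ := by
  rw [integral_complex_ofReal, ← ofReal_norm, norm_real, Real.norm_of_nonneg (integral_nonneg hw0),
    ofReal_integral_eq_lintegral_ofReal hw (ae_of_all _ hw0)]

lemma setLIntegral_abs_rpow_mul_norm_propagatorTranspose_sq_le {C : ℝ≥0} (hα : α < 1)
    (hτ : Measurable τ) (hh : Measurable h) (hhi : Integrable h) (hN : 0 ≤ N)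
    (hC : ∀ t x, ‖∫ ξ in -N..N, kernelIntegrand α σ t x ξ‖ₑ ≤ C * ‖x‖ₑ ^ (-(1 - α))) :
    ∫⁻ ξ in Ioc (-N) N, ENNReal.ofReal (|ξ| ^ (-α) * ‖propagatorTranspose σ τ h ξ‖ ^ 2) ≤
      C * ∫⁻ x, ∫⁻ y, ‖h x‖ₑ * ‖h y‖ₑ * ‖x - y‖ₑ ^ (-(1 - α)) := by
  set F : ℝ → ℝ × ℝ → ℂ := fun ξ z ↦ h z.1 * conj (h z.2) *
    kernelIntegrand α σ (τ z.1 - τ z.2) (z.1 - z.2) ξ with hF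
  have hFint := integrable_mul_conj_mul_kernelIntegrand (N := N) (σ := σ) hα hτ hhi
  have hinner (z : ℝ × ℝ) : ‖∫ ξ in Ioc (-N) N, F ξ z‖ₑ ≤
      C * (‖h z.1‖ₑ * ‖h z.2‖ₑ * ‖z.1 - z.2‖ₑ ^ (-(1 - α))) := by
    rw [integral_const_mul, enorm_mul, enorm_mul, RCLike.enorm_conj, mul_left_comm,
      ← intervalIntegral.integral_of_le (neg_le_self hN)]
    gcongr
    exact hC _ _
  calc ∫⁻ ξ in Ioc (-N) N, ENNReal.ofReal (|ξ| ^ (-α) * ‖propagatorTranspose σ τ h ξ‖ ^ 2)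
      = ‖∫ ξ in Ioc (-N) N, ∫ z, F ξ z‖ₑ := by
        have hG := hFint.integral_prod_left
        simp only [Function.uncurry_apply_pair, hF,
          ← ofReal_abs_rpow_mul_norm_propagatorTranspose_sq] at hG ⊢
        exact lintegral_ofReal_eq_enorm_integral_ofReal
          (by simpa only [RCLike.re_to_complex, ofReal_re] using hG.re) fun ξ ↦ by positivity
    _ = ‖∫ z, ∫ ξ in Ioc (-N) N, F ξ z‖ₑ := by rw [integral_integral_swap hFint]
    _ ≤ ∫⁻ z : ℝ × ℝ, C * (‖h z.1‖ₑ * ‖h z.2‖ₑ * ‖z.1 - z.2‖ₑ ^ (-(1 - α))) :=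
        (enorm_integral_le_lintegral_enorm _).trans (lintegral_mono hinner)
    _ = C * ∫⁻ x, ∫⁻ y, ‖h x‖ₑ * ‖h y‖ₑ * ‖x - y‖ₑ ^ (-(1 - α)) := by
        rw [lintegral_const_mul' _ _ coe_ne_top, Measure.volume_eq_prod,
          lintegral_prod _ (by fun_prop)]

theorem exists_lintegral_abs_rpow_mul_norm_propagatorTranspose_sq_le (hα : 1 / 2 ≤ α) (hα1 : α < 1)
    (hσ : σ ≠ 1) :
    ∃ C : ℝ≥0, ∀ (τ : ℝ → ℝ) (h : ℝ → ℂ), Measurable τ → Measurable h → Integrable h →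
      ∫⁻ ξ, ENNReal.ofReal (|ξ| ^ (-α) * ‖propagatorTranspose σ τ h ξ‖ ^ 2) ≤
        C * ∫⁻ x, ∫⁻ y, ‖h x‖ₑ * ‖h y‖ₑ * ‖x - y‖ₑ ^ (-(1 - α)) := by
  obtain ⟨C, hC⟩ := exists_enorm_integral_kernelIntegrand_le hα hα1 hσ
  refine ⟨C, fun τ h hτ hh hhi ↦ ?_⟩
  have hcover : AECover volume atTop fun N : ℝ ↦ Ioc (-N) N :=
    aecover_Ioc tendsto_neg_atTop_atBot tendsto_id
  have hmeas := measurable_propagatorTranspose (σ := σ) hτ hh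
  refine le_of_tendsto (hcover.lintegral_tendsto_of_countably_generated (by fun_prop)) ?_
  filter_upwards [eventually_ge_atTop 0] with N hN
  exact setLIntegral_abs_rpow_mul_norm_propagatorTranspose_sq_le hα1 hτ hh hhi hN
    fun t x ↦ hC t x N hN

end TTStar

end Propagator

section LinearizedEstimate

variable {σ s p q : ℝ} {τ : ℝ → ℝ} {G : ℝ → ℂ}

lemma exists_enorm_le_lintegral_enorm_mul_eq {X : Type*} [MeasurableSpace X] {μ : Measure X}
    {u : X → ℂ} (hu : Measurable u) {g : X → ℝ≥0} (hg : Measurable g)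
    (hug : Integrable (fun x ↦ ‖u x‖ * g x) μ) :
    ∃ h : X → ℂ, Measurable h ∧ (∀ x, ‖h x‖ₑ ≤ g x) ∧
      ∫⁻ x, ‖u x‖ₑ * g x ∂μ = ‖∫ x, h x * u x ∂μ‖ₑ := by
  refine ⟨fun x ↦ g x * (conj (u x) / ‖u x‖), ?_, fun x ↦ ?_, ?_⟩
  · fun_prop
  · rw [enorm_mul, ← ofReal_norm (conj (u x) / _), norm_div, norm_real, norm_norm, RCLike.norm_conj,
      ← ofReal_norm, norm_real, NNReal.norm_eq, ENNReal.ofReal_coe_nnreal]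
    exact mul_le_of_le_one_right zero_le (ENNReal.ofReal_le_one.2 (div_self_le_one _))
  · have hphase (x) : g x * (conj (u x) / ‖u x‖) * u x = ((‖u x‖ * g x : ℝ) : ℂ) := by
      rcases eq_or_ne (u x) 0 with hx | hx
      · simp [hx]
      · have hnorm : (‖u x‖ : ℂ) ≠ 0 := by simpa using hx
        rw [mul_assoc, div_mul_eq_mul_div, Complex.conj_mul', pow_two,
          mul_div_cancel_right₀ _ hnorm, mul_comm, Complex.ofReal_mul]
    simp only [hphase]
    rw [← lintegral_ofReal_eq_enorm_integral_ofReal hug fun x ↦ by positivity]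
    refine lintegral_congr fun x ↦ ?_
    rw [ENNReal.ofReal_mul (norm_nonneg _), ofReal_norm, ENNReal.ofReal_coe_nnreal]

lemma lintegral_enorm_mul_enorm_le_weighted {H : ℝ → ℂ} (hH : Measurable H) (hG : Measurable G) :
    ∫⁻ ξ, ‖H ξ‖ₑ * ‖G ξ‖ₑ ≤
      (∫⁻ ξ, ENNReal.ofReal (|ξ| ^ (-(2 * s)) * ‖H ξ‖ ^ 2)) ^ (1 / 2 : ℝ) *
        (∫⁻ ξ, ENNReal.ofReal (|ξ| ^ s * ‖G ξ‖) ^ (2 : ℝ)) ^ (1 / 2 : ℝ) := by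
  have hsplit : ∀ᵐ ξ : ℝ, ‖H ξ‖ₑ * ‖G ξ‖ₑ =
      ENNReal.ofReal (|ξ| ^ (-s) * ‖H ξ‖) * ENNReal.ofReal (|ξ| ^ s * ‖G ξ‖) := by
    filter_upwards [Measure.ae_ne volume 0] with ξ hξ
    have hcancel : |ξ| ^ (-s) * |ξ| ^ s = 1 := by
      rw [← Real.rpow_add (abs_pos.2 hξ), neg_add_cancel, Real.rpow_zero]
    rw [← ENNReal.ofReal_mul (by positivity), mul_mul_mul_comm, hcancel, one_mul,
      ENNReal.ofReal_mul (norm_nonneg _), ofReal_norm, ofReal_norm]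
  have hsq (ξ : ℝ) : ENNReal.ofReal (|ξ| ^ (-s) * ‖H ξ‖) ^ (2 : ℝ) =
      ENNReal.ofReal (|ξ| ^ (-(2 * s)) * ‖H ξ‖ ^ 2) := by
    rw [ENNReal.rpow_two, ← ENNReal.ofReal_pow (by positivity), mul_pow, ← Real.rpow_mul_natCast
      (abs_nonneg ξ)]
    congr 3
    push_cast
    ring
  rw [lintegral_congr_ae hsplit]
  simp only [← hsq]
  exact ENNReal.lintegral_mul_le_Lp_mul_Lq _ Real.HolderConjugate.two_two (by fun_prop)
    (by fun_prop)

lemma lintegral_enorm_propagator_mul_le {C : ℝ≥0} (hτ : Measurable τ) (hG : Measurable G)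
    (hGi : Integrable G)
    (hC : ∀ h : ℝ → ℂ, Measurable h → Integrable h →
      ∫⁻ ξ, ENNReal.ofReal (|ξ| ^ (-(2 * s)) * ‖propagatorTranspose σ τ h ξ‖ ^ 2) ≤
        C * ∫⁻ x, ∫⁻ y, ‖h x‖ₑ * ‖h y‖ₑ * ‖x - y‖ₑ ^ (-(1 - 2 * s)))
    {g : ℝ → ℝ≥0} (hg : Measurable g) (hgi : ∫⁻ x, g x ≠ ∞) :
    ∫⁻ x, ‖propagator σ G (τ x) x‖ₑ * g x ≤
      (C * ∫⁻ x, ∫⁻ y, g x * g y * ‖x - y‖ₑ ^ (-(1 - 2 * s))) ^ (1 / 2 : ℝ) *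
        (∫⁻ ξ, ENNReal.ofReal (|ξ| ^ s * ‖G ξ‖) ^ (2 : ℝ)) ^ (1 / 2 : ℝ) := by
  have hu := measurable_propagator (σ := σ) hτ hG
  have hgint : Integrable fun x ↦ (g x : ℝ) :=
    ⟨hg.coe_nnreal_real.aestronglyMeasurable, by
      simpa only [HasFiniteIntegral, NNReal.enorm_eq, hasFiniteIntegral_iff_enorm] using hgi.lt_top⟩
  have hug : Integrable fun x ↦ ‖propagator σ G (τ x) x‖ * g x :=
    hgint.bdd_mul (c := ∫ ξ, ‖G ξ‖) hu.norm.aestronglyMeasurable (ae_of_all _ fun x ↦ by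
      rw [norm_norm]
      exact norm_propagator_le _ _)
  obtain ⟨h, hh, hhg, hdual⟩ := exists_enorm_le_lintegral_enorm_mul_eq hu hg hug
  have hhi : Integrable h := ⟨hh.aestronglyMeasurable,
    (lintegral_mono hhg).trans_lt hgi.lt_top⟩
  calc ∫⁻ x, ‖propagator σ G (τ x) x‖ₑ * g x
      = ‖∫ ξ, propagatorTranspose σ τ h ξ * G ξ‖ₑ := by
        rw [hdual, integral_mul_propagator hτ hhi hGi]
    _ ≤ ∫⁻ ξ, ‖propagatorTranspose σ τ h ξ‖ₑ * ‖G ξ‖ₑ := by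
        simpa only [enorm_mul] using
          enorm_integral_le_lintegral_enorm fun ξ ↦ propagatorTranspose σ τ h ξ * G ξ
    _ ≤ _ := lintegral_enorm_mul_enorm_le_weighted (s := s)
        (measurable_propagatorTranspose hτ hh) hG
    _ ≤ _ := by
        gcongr
        refine (hC h hh hhi).trans ?_
        gcongr <;> exact hhg _

theorem exists_lintegral_enorm_propagator_rpow_le (hs : 1 / 4 ≤ s) (hs2 : s < 1 / 2)
    (hp : p = 2 / (1 - 2 * s)) (hσ : σ ≠ 1) :
    ∃ C : ℝ≥0, ∀ (τ : ℝ → ℝ) (G : ℝ → ℂ), Measurable τ → Measurable G → Integrable G →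
      (∫⁻ x, ‖propagator σ G (τ x) x‖ₑ ^ p) ^ (1 / p) ≤
        C * (∫⁻ ξ, ENNReal.ofReal (|ξ| ^ s * ‖G ξ‖) ^ (2 : ℝ)) ^ (1 / 2 : ℝ) := by
  obtain ⟨C, hC⟩ := exists_lintegral_abs_rpow_mul_norm_propagatorTranspose_sq_le
    (α := 2 * s) (by linarith) (by linarith) hσ
  have hp2 : 2 < p := by
    rw [hp, lt_div_iff₀ (by linarith)]
    linarith
  have hpq : p.HolderConjugate p.conjExponent := .conjExponent (by linarith)
  have hexp : 1 - 2 * s = 2 / p := by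
    rw [hp, div_div_cancel₀ two_ne_zero]
  refine ⟨(C * (2 * hlsConst p)) ^ (1 / 2 : ℝ), fun τ G hτ hG hGi ↦ ?_⟩
  refine lintegral_rpow_le_of_forall_lintegral_mul_le hpq
    (f := fun x ↦ ‖propagator σ G (τ x) x‖₊) fun g hg hgi ↦ ?_
  refine (lintegral_enorm_propagator_mul_le hτ hG hGi (fun h ↦ hC τ h hτ) hg hgi).trans ?_
  rw [hexp, mul_right_comm]
  gcongr
  calc (C * ∫⁻ x, ∫⁻ y, g x * g y * ‖x - y‖ₑ ^ (-(2 / p))) ^ (1 / 2 : ℝ)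
      ≤ (C * (2 * hlsConst p * (∫⁻ x, (g x : ℝ≥0∞) ^ p.conjExponent) ^
          (2 / p.conjExponent))) ^ (1 / 2 : ℝ) := by
        gcongr
        exact lintegral_lintegral_mul_enorm_sub_rpow_neg_le hp2 hpq.symm hg
    _ = _ := by
        rw [← mul_assoc, ENNReal.mul_rpow_of_nonneg _ _ (by norm_num), ← ENNReal.rpow_mul,
          ENNReal.coe_rpow_of_nonneg _ (by norm_num)]
        push_cast
        ring_nf

theorem exists_lintegral_iSup_enorm_propagator_rpow_le (hs : 1 / 4 ≤ s) (hs2 : s < 1 / 2)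
    (hp : p = 2 / (1 - 2 * s)) (hσ : σ ≠ 1) :
    ∃ C : ℝ≥0, ∀ G : ℝ → ℂ, Measurable G → Integrable G →
      (∫⁻ x, (⨆ t, ‖propagator σ G t x‖ₑ) ^ p) ^ (1 / p) ≤
        C * (∫⁻ ξ, ENNReal.ofReal (|ξ| ^ s * ‖G ξ‖) ^ (2 : ℝ)) ^ (1 / 2 : ℝ) := by
  obtain ⟨C, hC⟩ := exists_lintegral_enorm_propagator_rpow_le hs hs2 hp hσ
  have hp0 : 0 < p := by
    rw [hp]
    exact div_pos two_pos (by linarith)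
  exact ⟨C, fun G hG hGi ↦ lintegral_iSup_rpow_le_of_forall_measurable_selection
    (fun t ↦ (measurable_propagator (τ := fun _ ↦ t) measurable_const hG).enorm)
    (fun x ↦ (continuous_propagator hGi x).enorm) hp0 fun τ hτ ↦ hC τ G hτ hG hGi⟩

end LinearizedEstimate

section FourierTransform

lemma fourierT_eq_fourier (f : ℝ → ℂ) (ξ : ℝ) : fourierT f ξ = 𝓕 f (ξ * (2 * Real.pi)⁻¹) := by
  rw [Real.fourier_real_eq_integral_exp_smul, fourierT]
  refine integral_congr_ae (ae_of_all _ fun x ↦ ?_)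
  have hpi : (Real.pi : ℂ) ≠ 0 := ofReal_ne_zero.2 Real.pi_ne_zero
  beta_reduce
  rw [smul_eq_mul, mul_comm]
  congr 2
  push_cast
  field_simp

lemma continuous_fourierT {f : ℝ → ℂ} (hf : Integrable f) : Continuous (fourierT f) := by
  simp only [funext (fourierT_eq_fourier f)]
  exact (VectorFourier.fourierIntegral_continuous Real.continuous_fourierChar
    (by fun_prop) hf).comp (by fun_prop)

lemma integrable_fourierT (f : SchwartzMap ℝ ℂ) : Integrable (fourierT fun y ↦ f y) := by
  simp only [funext (fourierT_eq_fourier _), ← SchwartzMap.fourier_coe]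
  exact (𝓕 f).integrable.comp_mul_right' (by positivity)

lemma enorm_propagator_eq (σ : ℝ) (G : ℝ → ℂ) (t x : ℝ) :
    ‖propagator σ G t x‖ₑ =
      (‖∫ ξ : ℝ, cexp (-(I * t * ((|ξ| ^ σ : ℝ) : ℂ))) * G ξ * cexp (I * x * ξ)‖₊ : ℝ≥0∞) := by
  rw [enorm_eq_nnnorm, propagator]
  congr 3 with ξ
  rw [mul_right_comm, ← Complex.exp_add, dispersiveWave]
  congr 2
  push_cast
  ring

end FourierTransform

theorem stmt6_general (σ s p : ℝ) (hσ : σ ≠ 1) (hs : 1 / 4 ≤ s) (hs2 : s < 1 / 2)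
    (hp : p = 2 / (1 - 2 * s)) :
    ∃ C : ℝ, 0 < C ∧ ∀ f : ℝ → ℂ, Integrable f → Integrable (fourierT f) →
      (∫⁻ x : ℝ, (⨆ t : ℝ,
          (‖∫ ξ : ℝ, cexp (-(I * (t : ℂ) * ((|ξ| ^ σ : ℝ) : ℂ))) * fourierT f ξ *
            cexp (I * (x : ℂ) * (ξ : ℂ))‖₊ : ℝ≥0∞)) ^ p) ^ (1 / p) ≤
        ENNReal.ofReal C *
          (∫⁻ ξ : ℝ, ENNReal.ofReal (|ξ| ^ s * ‖fourierT f ξ‖) ^ (2 : ℝ)) ^ ((1 : ℝ) / 2) := by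
  obtain ⟨C, hC⟩ := exists_lintegral_iSup_enorm_propagator_rpow_le hs hs2 hp hσ
  refine ⟨C + 1, by positivity, fun f hf hfT ↦ ?_⟩
  have hmax := hC (fourierT f) (continuous_fourierT hf).measurable hfT
  simp only [enorm_propagator_eq] at hmax
  refine hmax.trans ?_
  gcongr
  rw [← ENNReal.ofReal_coe_nnreal]
  exact ENNReal.ofReal_le_ofReal (by linarith)

end

/-- Maximal function estimate for the fractional Schrödinger propagator:
for `σ > 1`, `1/4 ≤ s < 1/2`, `p = 2/(1-2s)`,
`‖ sup_t |e^{-it|∇|^σ} f| ‖_{L^p_x} ≲ ‖ |∇|^s f ‖_{L²}` (the right side written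
via Plancherel as the `L²` norm of `|ξ|^s f̂`). -/
theorem stmt6 (σ s p : ℝ) (hσ : 1 < σ) (hs : 1/4 ≤ s) (hs2 : s < 1/2)
    (hp : p = 2 / (1 - 2*s)) :
    ∃ C : ℝ, 0 < C ∧ ∀ f : SchwartzMap ℝ ℂ,
      (∫⁻ x : ℝ, (⨆ t : ℝ,
          (‖∫ ξ : ℝ, Complex.exp (-(Complex.I * (t : ℂ) * ((|ξ| ^ σ : ℝ) : ℂ)))
              * fourierT (fun y => f y) ξ
              * Complex.exp (Complex.I * (x : ℂ) * (ξ : ℂ))‖₊ : ℝ≥0∞)) ^ p) ^ (1/p)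
        ≤ ENNReal.ofReal C *
          (∫⁻ ξ : ℝ, (ENNReal.ofReal (|ξ| ^ s * ‖fourierT (fun y => f y) ξ‖)) ^ (2:ℝ)) ^ ((1:ℝ)/2) := by
  obtain ⟨C, hC0, hC⟩ := stmt6_general σ s p hσ.ne' hs hs2 hp
  exact ⟨C, hC0, fun f ↦ hC _ f.integrable (integrable_fourierT f)⟩
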